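/- Let (α_n) and (ε_n) be sequences of reals in (0,1) with α_n/ε_n → ∞ and α_n ε_n^3 (n log n)^{1/2} → ∞, and for each n let G_n be an (α_n, ε_n)-regular graph on n vertices. Then for all sufficiently large n, G_n contains at least (α_n/2 − 4ε_n)n pairwise edge-disjoint Hamilton cycles. -/

import Mathlib

open Finset Filter

open scoped Classical in
/-- A graph `G` on `[n]` is `(α, ε)`-regular: every vertex has degree at least `(α-ε)n`,
and for all disjoint `S, T` with `|S|, |T| ≥ εn`, `|e(S,T)/(|S||T|) - α| ≤ ε`. -/
def IsRegularGraph {n : ℕ} (G : SimpleGraph (Fin n)) (α ε : ℝ) : Prop :=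
  (∀ v : Fin n, (α - ε) * (n : ℝ) ≤ ((Finset.univ.filter fun w => G.Adj v w).card : ℝ)) ∧
  ∀ S T : Finset (Fin n), Disjoint S T → ε * (n : ℝ) ≤ (S.card : ℝ) → ε * (n : ℝ) ≤ (T.card : ℝ) →
    |(((S ×ˢ T).filter fun e => G.Adj e.1 e.2).card : ℝ) / ((S.card : ℝ) * (T.card : ℝ)) - α| ≤ ε

open scoped Classical in
/-- `s` is the edge set of a Hamiltonian cycle of `G`. -/
def IsHamCycleEdgeSet {n : ℕ} (G : SimpleGraph (Fin n)) (s : Finset (Sym2 (Fin n))) : Prop :=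
  ∃ (a : Fin n) (w : G.Walk a a), w.IsHamiltonianCycle ∧ s = w.edges.toFinset

/-- one-sided moment bound -/
theorem hoeff_one {κ : Type*} [Fintype κ] [Nonempty κ] (g : κ → ℝ)
    (h0 : ∀ c, 0 ≤ g c) (h1 : ∀ c, g c ≤ 1) (t : ℝ) (ht : |t| ≤ 1) :
    ∑ c, Real.exp (t * (g c - (∑ c, g c) / Fintype.card κ)) ≤
      Fintype.card κ * Real.exp (t ^ 2) := by
  have hk : (0 : ℝ) < Fintype.card κ := by exact_mod_cast Fintype.card_pos
  set μ := (∑ c, g c) / Fintype.card κ with hμ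
  have hμ0 : 0 ≤ μ := div_nonneg (Finset.sum_nonneg fun c _ => h0 c) hk.le
  have hμ1 : μ ≤ 1 := by
    rw [hμ, div_le_one hk]
    calc ∑ c, g c ≤ ∑ c : κ, (1 : ℝ) := Finset.sum_le_sum fun c _ => h1 c
      _ = _ := by simp
  have hx : ∀ c, |g c - μ| ≤ 1 := fun c => by
    rw [abs_le]; constructor <;> linarith [h0 c, h1 c]
  have key : ∀ c, Real.exp (t * (g c - μ)) ≤ 1 + t * (g c - μ) + t ^ 2 := fun c => by
    have h2 : |t * (g c - μ)| ≤ 1 := by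
      rw [abs_mul]; nlinarith [hx c, abs_nonneg t, abs_nonneg (g c - μ)]
    have h3 := abs_le.1 (Real.abs_exp_sub_one_sub_id_le h2)
    have h4 : (t * (g c - μ)) ^ 2 ≤ t ^ 2 := by
      rw [mul_pow]
      have : (g c - μ) ^ 2 ≤ 1 := by rw [sq_le_one_iff_abs_le_one]; exact hx c
      nlinarith [sq_nonneg t]
    linarith [h3.2]
  calc ∑ c, Real.exp (t * (g c - μ)) ≤ ∑ c, (1 + t * (g c - μ) + t ^ 2) :=
        Finset.sum_le_sum fun c _ => key c
    _ = Fintype.card κ * (1 + t ^ 2) + t * (∑ c, g c - Fintype.card κ * μ) := by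
        simp only [Finset.sum_add_distrib, ← Finset.mul_sum, Finset.sum_sub_distrib]
        simp; ring
    _ = Fintype.card κ * (1 + t ^ 2) := by
        rw [hμ]; field_simp; ring
    _ ≤ _ := by
        apply mul_le_mul_of_nonneg_left _ hk.le
        linarith [Real.add_one_le_exp (t ^ 2)]

theorem hoeff_tail {ι κ : Type*} [Fintype ι] [DecidableEq ι] [Fintype κ] [Nonempty κ]
    (g : ι → κ → ℝ) (h0 : ∀ i c, 0 ≤ g i c) (h1 : ∀ i c, g i c ≤ 1)
    (s : Finset ι) (hs : ∀ i, i ∉ s → ∀ c, g i c = 0)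
    (t : ℝ) (ht : |t| ≤ 1) :
    ∑ f : ι → κ, Real.exp (t * (∑ i, g i (f i) - ∑ i, (∑ c, g i c) / Fintype.card κ)) ≤
      (Fintype.card κ : ℝ) ^ Fintype.card ι * Real.exp (t ^ 2 * s.card) := by
  have hk : (0 : ℝ) < Fintype.card κ := by exact_mod_cast Fintype.card_pos
  have e1 : ∀ f : ι → κ, Real.exp (t * (∑ i, g i (f i) - ∑ i, (∑ c, g i c) / Fintype.card κ)) =
      ∏ i, Real.exp (t * (g i (f i) - (∑ c, g i c) / Fintype.card κ)) := fun f => by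
    rw [← Real.exp_sum, ← Finset.mul_sum, Finset.sum_sub_distrib]
  simp_rw [e1]
  rw [← Fintype.prod_sum (fun i c => Real.exp (t * (g i c - (∑ c, g i c) / Fintype.card κ)))]
  calc ∏ i, ∑ c, Real.exp (t * (g i c - (∑ c, g i c) / Fintype.card κ))
      ≤ ∏ i : ι, ((Fintype.card κ : ℝ) * if i ∈ s then Real.exp (t ^ 2) else 1) := by
        apply Finset.prod_le_prod
        · intro i _; exact Finset.sum_nonneg fun c _ => (Real.exp_pos _).le
        · intro i _
          split_ifs with hi
          · exact hoeff_one _ (h0 i) (h1 i) t ht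
          · simp [hs i hi]
    _ = _ := by
        rw [Finset.prod_mul_distrib, Finset.prod_const, Finset.prod_ite_mem, Finset.univ_inter,
          Finset.prod_const, ← Real.exp_nat_mul, Finset.card_univ]
        congr 2; ring

theorem exists_good {ι κ J : Type*} [Fintype ι] [DecidableEq ι] [Fintype κ] [Nonempty κ] [Fintype J]
    (g : J → ι → κ → ℝ) (h0 : ∀ j i c, 0 ≤ g j i c) (h1 : ∀ j i c, g j i c ≤ 1)
    (s : J → Finset ι) (hs : ∀ j i, i ∉ s j → ∀ c, g j i c = 0)
    (N lam : J → ℝ) (hN : ∀ j, 0 < N j) (hsN : ∀ j, ((s j).card : ℝ) ≤ N j)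
    (hl0 : ∀ j, 0 ≤ lam j) (hlN : ∀ j, lam j ≤ N j)
    (hsum : ∑ j, 2 * Real.exp (-(lam j) ^ 2 / (4 * N j)) < 1) :
    ∃ f : ι → κ, ∀ j, |∑ i, g j i (f i) - ∑ i, (∑ c, g j i c) / Fintype.card κ| ≤ lam j := by
  classical
  by_contra hcon
  push Not at hcon
  have hk : (0 : ℝ) < Fintype.card κ := by exact_mod_cast Fintype.card_pos
  set X : J → (ι → κ) → ℝ := fun j f => ∑ i, g j i (f i) - ∑ i, (∑ c, g j i c) / Fintype.card κ
    with hX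
  have hT : ∀ j, |lam j / (2 * N j)| ≤ 1 := fun j => by
    rw [abs_of_nonneg (div_nonneg (hl0 j) (by linarith [hN j])), div_le_one (by linarith [hN j])]
    linarith [hN j, hlN j]
  have hb : ∀ j, ∑ f, (Real.exp (lam j / (2 * N j) * X j f - (lam j) ^ 2 / (2 * N j))
      + Real.exp (-(lam j / (2 * N j)) * X j f - (lam j) ^ 2 / (2 * N j))) ≤
      (Fintype.card κ : ℝ) ^ Fintype.card ι * (2 * Real.exp (-(lam j) ^ 2 / (4 * N j))) := by
    intro j
    have hNj := hN j
    have gen : ∀ t : ℝ, |t| ≤ 1 → t ^ 2 = (lam j / (2 * N j)) ^ 2 →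
        ∑ f, Real.exp (t * X j f - (lam j) ^ 2 / (2 * N j)) ≤
        (Fintype.card κ : ℝ) ^ Fintype.card ι * Real.exp (-(lam j) ^ 2 / (4 * N j)) := by
      intro t ht ht2
      have := hoeff_tail (g j) (h0 j) (h1 j) (s j) (hs j) t ht
      simp_rw [sub_eq_add_neg (t * _), Real.exp_add]
      rw [← Finset.sum_mul]
      calc _ ≤ ((Fintype.card κ : ℝ) ^ Fintype.card ι * Real.exp (t ^ 2 * (s j).card)) *
            Real.exp (-((lam j) ^ 2 / (2 * N j))) :=
            mul_le_mul_of_nonneg_right this (Real.exp_pos _).le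
        _ ≤ _ := by
            rw [mul_assoc, ← Real.exp_add]
            apply mul_le_mul_of_nonneg_left _ (by positivity)
            apply Real.exp_le_exp.2
            have : t ^ 2 * (s j).card ≤ t ^ 2 * N j :=
              mul_le_mul_of_nonneg_left (hsN j) (sq_nonneg _)
            have e : t ^ 2 * N j = (lam j) ^ 2 / (4 * N j) := by
              rw [ht2]; field_simp; ring
            have e2 : (lam j) ^ 2 / (2 * N j) = 2 * ((lam j) ^ 2 / (4 * N j)) := by
              field_simp; ring
            rw [neg_div]
            linarith
    rw [Finset.sum_add_distrib]
    have a := gen _ (hT j) rfl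
    have b := gen (-(lam j / (2 * N j))) (by rw [abs_neg]; exact hT j) (by ring)
    linarith
  have h2 : (Fintype.card κ : ℝ) ^ Fintype.card ι ≤ ∑ f : ι → κ, ∑ j,
      (Real.exp (lam j / (2 * N j) * X j f - (lam j) ^ 2 / (2 * N j))
      + Real.exp (-(lam j / (2 * N j)) * X j f - (lam j) ^ 2 / (2 * N j))) := by
    calc (Fintype.card κ : ℝ) ^ Fintype.card ι = ∑ f : ι → κ, (1 : ℝ) := by simp
      _ ≤ _ := by
        apply Finset.sum_le_sum
        intro f _
        obtain ⟨j, hj⟩ := hcon f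
        refine le_trans ?_ (Finset.single_le_sum (fun j _ => by positivity) (Finset.mem_univ j))
        have hNj := hN j
        have hc : 0 ≤ lam j / (2 * N j) := div_nonneg (hl0 j) (by linarith)
        have e2 : (lam j) ^ 2 / (2 * N j) = lam j / (2 * N j) * lam j := by
          field_simp
        rcases lt_abs.1 hj with h | h
        · have : 1 ≤ Real.exp (lam j / (2 * N j) * X j f - (lam j) ^ 2 / (2 * N j)) := by
            apply Real.one_le_exp
            rw [e2]; have := mul_le_mul_of_nonneg_left h.le hc
            simp only [hX]; linarith
          linarith [Real.exp_pos (-(lam j / (2 * N j)) * X j f - (lam j) ^ 2 / (2 * N j))]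
        · have : 1 ≤ Real.exp (-(lam j / (2 * N j)) * X j f - (lam j) ^ 2 / (2 * N j)) := by
            apply Real.one_le_exp
            rw [e2]; have := mul_le_mul_of_nonneg_left h.le hc
            simp only [hX]; linarith
          linarith [Real.exp_pos ((lam j / (2 * N j)) * X j f - (lam j) ^ 2 / (2 * N j))]
  rw [Finset.sum_comm] at h2
  have h3 := h2.trans (Finset.sum_le_sum fun j _ => hb j)
  rw [← Finset.mul_sum] at h3
  have hp : 0 < (Fintype.card κ : ℝ) ^ Fintype.card ι := by positivity
  nlinarith

open scoped Classical in
theorem card_filter_prod_eq_sum {X Y : Type*} (S : Finset X) (T : Finset Y) (Q : X → Y → Prop) :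
    ((S ×ˢ T).filter fun e => Q e.1 e.2).card = ∑ x ∈ S, (T.filter fun y => Q x y).card := by
  rw [Finset.card_filter, Finset.sum_product]
  simp_rw [Finset.card_filter]

open scoped Classical in
theorem card_filter_prod_eq_sum' {X Y : Type*} (S : Finset X) (T : Finset Y) (Q : X → Y → Prop) :
    ((S ×ˢ T).filter fun e => Q e.1 e.2).card = ∑ y ∈ T, (S.filter fun x => Q x y).card := by
  rw [Finset.card_filter, Finset.sum_product_right]
  simp_rw [Finset.card_filter]

open scoped Classical in
theorem exists_factor {X Y : Type*} [Fintype X] [Fintype Y] (m D : ℕ)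
    (hX : Fintype.card X = m) (hY : Fintype.card Y = m) (Q : X → Y → Prop)
    (hQ : ∀ (S : Finset X) (T : Finset Y),
      D * (S.card + T.card) ≤ ((S ×ˢ T).filter fun e => Q e.1 e.2).card + D * m) :
    ∃ Q' : X → Y → Prop, (∀ x y, Q' x y → Q x y) ∧
      (∀ x, (univ.filter fun y => Q' x y).card = D) ∧
      (∀ y, (univ.filter fun x => Q' x y).card = D) := by
  set dg : Y → ℕ := fun y => (univ.filter fun x => Q x y).card with hdg
  have hdD : ∀ y, D ≤ dg y := by
    intro y
    have h := hQ univ {y}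
    rw [card_filter_prod_eq_sum'] at h
    simp only [Finset.card_univ, hX, Finset.card_singleton, Finset.sum_singleton] at h
    rw [mul_add] at h
    simp only [hdg]; linarith
  set t : (X × Fin D) ⊕ (Σ y : Y, Fin (dg y - D)) → Finset (X × Y) := fun l =>
    match l with
    | Sum.inl p => univ.filter fun e : X × Y => Q e.1 e.2 ∧ e.1 = p.1
    | Sum.inr p => univ.filter fun e : X × Y => Q e.1 e.2 ∧ e.2 = p.1 with ht
  have hall : ∀ F : Finset ((X × Fin D) ⊕ (Σ y : Y, Fin (dg y - D))),
      F.card ≤ (F.biUnion t).card := by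
    intro F
    set S : Finset X := univ.filter fun x => ∃ i, Sum.inl (x, i) ∈ F with hS
    set T : Finset Y := univ.filter fun y => ∃ i, Sum.inr ⟨y, i⟩ ∈ F with hT
    have h1 : F ⊆ (S ×ˢ (univ : Finset (Fin D))).disjSum
        (T.sigma fun y => (univ : Finset (Fin (dg y - D)))) := by
      rintro (⟨x, i⟩ | ⟨y, i⟩) hl
      · simp only [Finset.inl_mem_disjSum, mem_product, mem_univ, and_true, hS, mem_filter,
          true_and]
        exact ⟨i, hl⟩
      · simp only [Finset.inr_mem_disjSum, mem_sigma, mem_univ, and_true, hT, mem_filter,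
          true_and]
        exact ⟨i, hl⟩
    have h2 := Finset.card_le_card h1
    rw [Finset.card_disjSum, Finset.card_product, Finset.card_sigma] at h2
    simp only [Finset.card_univ, Fintype.card_fin] at h2
    have h3 : ((S ×ˢ Tᶜ).filter fun e => Q e.1 e.2) ∪ (((univ : Finset X) ×ˢ T).filter fun e => Q e.1 e.2)
        ⊆ F.biUnion t := by
      rintro ⟨x, y⟩ he
      simp only [mem_union, mem_filter, mem_product, mem_compl, mem_univ, true_and] at he
      rw [mem_biUnion]
      rcases he with ⟨⟨hx, -⟩, hq⟩ | ⟨hy, hq⟩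
      · obtain ⟨i, hi⟩ := (mem_filter.1 hx).2
        exact ⟨_, hi, by simp [ht, hq]⟩
      · obtain ⟨i, hi⟩ := (mem_filter.1 hy).2
        exact ⟨_, hi, by simp [ht, hq]⟩
    have h4 := Finset.card_le_card h3
    rw [Finset.card_union_of_disjoint, card_filter_prod_eq_sum' univ T] at h4
    · have h5 := hQ S Tᶜ
      have h6 : T.card + Tᶜ.card = m := by rw [Finset.card_add_card_compl, hY]
      have h7 : ∑ y ∈ T, (dg y - D) + D * T.card = ∑ y ∈ T, dg y := by
        rw [mul_comm, ← smul_eq_mul, ← Finset.sum_const, ← Finset.sum_add_distrib]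
        exact Finset.sum_congr rfl fun y _ => Nat.sub_add_cancel (hdD y)
      rw [← h6, mul_add, mul_add] at h5
      simp only [hdg] at h2 h7 h4
      have := mul_comm D S.card
      linarith
    · rw [Finset.disjoint_left]
      rintro ⟨x, y⟩ h h'
      simp only [mem_filter, mem_product, mem_compl] at h h'
      exact h.1.2 h'.1.2
  obtain ⟨f, hf, hft⟩ := (Finset.all_card_le_biUnion_card_iff_exists_injective t).1 hall
  have hl : ∀ x i, Q x (f (Sum.inl (x, i))).2 ∧ (f (Sum.inl (x, i))).1 = x := by
    intro x i
    have := hft (Sum.inl (x, i))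
    simp only [ht, mem_filter, mem_univ, true_and] at this
    exact ⟨by simpa [this.2] using this.1, this.2⟩
  have hr : ∀ y i, Q (f (Sum.inr ⟨y, i⟩)).1 y ∧ (f (Sum.inr ⟨y, i⟩)).2 = y := by
    intro y i
    have := hft (Sum.inr ⟨y, i⟩)
    simp only [ht, mem_filter, mem_univ, true_and] at this
    exact ⟨by simpa [this.2] using this.1, this.2⟩
  obtain ⟨Q', hQ'⟩ : ∃ Q' : X → Y → Prop, ∀ x y, Q' x y ↔ ∃ i, f (Sum.inl (x, i)) = (x, y) :=
    ⟨_, fun _ _ => Iff.rfl⟩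
  have hrow : ∀ x, (univ.filter fun y => Q' x y).card = D := by
    intro x
    have : (univ.filter fun y => Q' x y) = univ.image fun i : Fin D => (f (Sum.inl (x, i))).2 := by
      ext y
      simp only [mem_filter, mem_univ, true_and, mem_image, hQ']
      refine exists_congr fun i => ?_
      rw [Prod.ext_iff]; simp [(hl x i).2]
    rw [this, Finset.card_image_of_injective, Finset.card_univ, Fintype.card_fin]
    intro i j hij
    have : f (Sum.inl (x, i)) = f (Sum.inl (x, j)) :=
      Prod.ext ((hl x i).2.trans (hl x j).2.symm) hij
    simpa using hf this
  have hcol : ∀ y, (univ.filter fun x => Q' x y).card ≤ D := by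
    intro y
    have hs : (univ.filter fun x => Q' x y) ∪
        (univ.image fun i : Fin (dg y - D) => (f (Sum.inr ⟨y, i⟩)).1) ⊆
        univ.filter fun x => Q x y := by
      intro x hx
      simp only [mem_union, mem_filter, mem_univ, true_and, mem_image, hQ'] at hx ⊢
      rcases hx with ⟨i, hi⟩ | ⟨i, rfl⟩
      · have := (hl x i).1; rw [hi] at this; exact this
      · exact (hr y i).1
    have hc := Finset.card_le_card hs
    rw [Finset.card_union_of_disjoint, Finset.card_image_of_injective, Finset.card_univ,
      Fintype.card_fin] at hc
    · have := hdD y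
      simp only [hdg] at this hc ⊢
      omega
    · intro i j hij
      have : f (Sum.inr ⟨y, i⟩) = f (Sum.inr ⟨y, j⟩) :=
        Prod.ext hij ((hr y i).2.trans (hr y j).2.symm)
      simpa using hf this
    · rw [Finset.disjoint_left]
      intro x hx hx'
      simp only [mem_filter, mem_univ, true_and, mem_image, hQ'] at hx hx'
      obtain ⟨i, hi⟩ := hx
      obtain ⟨j, hj⟩ := hx'
      have : f (Sum.inl (x, i)) = f (Sum.inr ⟨y, j⟩) := by
        rw [hi]; exact Prod.ext hj.symm (hr y j).2.symm
      simpa using hf this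
  refine ⟨Q', ?_, hrow, ?_⟩
  · intro x y hxy
    obtain ⟨i, hi⟩ := (hQ' x y).1 hxy
    have := (hl x i).1; rw [hi] at this; exact this
  · have e1 := card_filter_prod_eq_sum (univ : Finset X) (univ : Finset Y) Q'
    rw [card_filter_prod_eq_sum'] at e1
    simp only [hrow, Finset.sum_const, Finset.card_univ, hX, smul_eq_mul] at e1
    have e2 : ∑ y : Y, (univ.filter fun x => Q' x y).card = ∑ y : Y, D := by
      rw [e1]; simp [hY]
    intro y
    exact (Finset.sum_eq_sum_iff_of_le fun y _ => hcol y).1 e2 y (mem_univ y)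

open scoped Classical in
theorem exists_perms {X Y : Type*} [Fintype X] [Fintype Y]
    (hXY : Fintype.card X = Fintype.card Y) (D : ℕ) : ∀ (Q : X → Y → Prop),
      (∀ x, (univ.filter fun y => Q x y).card = D) →
      (∀ y, (univ.filter fun x => Q x y).card = D) →
      ∃ π : Fin D → (X ≃ Y), (∀ h x, Q x (π h x)) ∧ ∀ h h' x, π h x = π h' x → h = h' := by
  induction D with
  | zero => intro Q _ _; exact ⟨fun h => h.elim0, fun h => h.elim0, fun h => h.elim0⟩
  | succ D ih =>
    intro Q hr hc
    have hall : ∀ S : Finset X, S.card ≤ (S.biUnion fun x => univ.filter fun y => Q x y).card := by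
      intro S
      set T := S.biUnion fun x => univ.filter fun y => Q x y with hT
      have h1 := card_filter_prod_eq_sum S T Q
      rw [card_filter_prod_eq_sum'] at h1
      have h2 : ∑ x ∈ S, (T.filter fun y => Q x y).card = S.card * (D + 1) := by
        rw [← smul_eq_mul, ← Finset.sum_const]
        refine Finset.sum_congr rfl fun x hx => ?_
        rw [← hr x]
        congr 1
        ext y
        simp only [mem_filter, mem_univ, true_and, hT, mem_biUnion, and_iff_right_iff_imp]
        exact fun h => ⟨x, hx, h⟩
      have h3 : ∑ y ∈ T, (S.filter fun x => Q x y).card ≤ T.card * (D + 1) := by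
        rw [← smul_eq_mul, ← Finset.sum_const]
        refine Finset.sum_le_sum fun y hy => ?_
        rw [← hc y]
        exact Finset.card_le_card (Finset.filter_subset_filter _ (Finset.subset_univ _))
      rw [h1, h2] at h3
      exact Nat.le_of_mul_le_mul_right h3 (Nat.succ_pos D)
    obtain ⟨f, hf, hfQ⟩ := (Finset.all_card_le_biUnion_card_iff_exists_injective _).1 hall
    have hfQ : ∀ x, Q x (f x) := fun x => (mem_filter.1 (hfQ x)).2
    have hbij : Function.Bijective f := (Fintype.bijective_iff_injective_and_card f).2 ⟨hf, hXY⟩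
    obtain ⟨Q2, hQ2⟩ : ∃ Q2 : X → Y → Prop, ∀ x y, Q2 x y ↔ (Q x y ∧ y ≠ f x) :=
      ⟨_, fun _ _ => Iff.rfl⟩
    obtain ⟨π, hπ, hπ'⟩ := ih Q2 (by
      intro x
      have : (univ.filter fun y => Q2 x y) = (univ.filter fun y => Q x y).erase (f x) := by
        ext y; simp [and_comm, hQ2]
      rw [this, Finset.card_erase_of_mem (by simp [hfQ x]), hr x]; rfl) (by
      intro y
      obtain ⟨x₀, rfl⟩ := hbij.2 y
      have : (univ.filter fun x => Q2 x (f x₀)) =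
          (univ.filter fun x => Q x (f x₀)).erase x₀ := by
        ext x
        simp only [mem_filter, mem_univ, true_and, mem_erase, ne_eq, hf.eq_iff, hQ2]
        rw [and_comm, eq_comm]
      rw [this, Finset.card_erase_of_mem (by simp [hfQ x₀]), hc]; rfl)
    refine ⟨Fin.cons (Equiv.ofBijective f hbij) π, ?_, ?_⟩
    · intro h x
      refine Fin.cases ?_ (fun h => ?_) h
      · simpa using hfQ x
      · simpa using ((hQ2 _ _).1 (hπ h x)).1
    · intro h h' x
      refine Fin.cases ?_ (fun h => ?_) h <;> refine Fin.cases ?_ (fun h' => ?_) h'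
      · simp
      · intro e; simp at e; exact absurd e.symm ((hQ2 _ _).1 (hπ h' x)).2
      · intro e; simp at e; exact absurd e ((hQ2 _ _).1 (hπ h x)).2
      · intro e; simp at e; rw [hπ' _ _ _ e]

open scoped Classical in
theorem rot_index {V : Type*} [Fintype V] (L : SimpleGraph V) (n a : ℕ) (ha : 1 ≤ a)
    (p : ℕ → V) (hinj : ∀ i j, i < n → j < n → p i = p j → i = j)
    (hsurj : ∀ v, ∃ i, i < n ∧ p i = v)
    (hdeg : ∀ v, 2 * a ≤ (univ.filter fun w => L.Adj v w).card)
    (hedge : ∀ S T : Finset V, Disjoint S T → a ≤ S.card → a ≤ T.card →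
      ∃ x ∈ S, ∃ y ∈ T, L.Adj x y)
    (hn : 1 ≤ n) (hfake : ¬ L.Adj (p (n - 1)) (p 0)) :
    ∃ i j, L.Adj (p (n - 1)) (p i) ∧ L.Adj (p 0) (p j) ∧
      ((1 ≤ j ∧ j ≤ i ∧ i + 1 < n ∧ L.Adj (p (i + 1)) (p (j - 1))) ∨
       (i < j ∧ j + 1 < n ∧ L.Adj (p (i + 1)) (p (j + 1)))) := by
  have hcard : ∀ v, 2 * a ≤ ((range n).filter fun i => L.Adj v (p i)).card := by
    intro v
    refine (hdeg v).trans ?_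
    have : (univ.filter fun w => L.Adj v w) ⊆ ((range n).filter fun i => L.Adj v (p i)).image p := by
      intro w hw
      obtain ⟨i, hi, rfl⟩ := hsurj w
      simp only [mem_filter, mem_univ, true_and] at hw
      exact mem_image.2 ⟨i, by simp [hi, hw], rfl⟩
    exact (card_le_card this).trans card_image_le
  set I := (range n).filter fun i => L.Adj (p (n - 1)) (p i) with hI
  set J := (range n).filter fun i => L.Adj (p 0) (p i) with hJ
  have hIc : 2 * a ≤ I.card := hcard _
  have hJc : 2 * a ≤ J.card := hcard _
  have hIn : ∀ i ∈ I, i + 1 < n ∧ L.Adj (p (n - 1)) (p i) := by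
    intro i hi
    simp only [hI, mem_filter, mem_range] at hi
    refine ⟨?_, hi.2⟩
    rcases Nat.lt_or_ge (i + 1) n with h | h
    · exact h
    · have : i = n - 1 := by omega
      subst this
      exact absurd hi.2 (L.irrefl)
  have hJn : ∀ j ∈ J, 1 ≤ j ∧ j + 1 < n ∧ L.Adj (p 0) (p j) := by
    intro j hj
    simp only [hJ, mem_filter, mem_range] at hj
    refine ⟨?_, ?_, hj.2⟩
    · rcases Nat.eq_zero_or_pos j with h | h
      · subst h; exact absurd hj.2 L.irrefl
      · exact h
    · rcases Nat.lt_or_ge (j + 1) n with h | h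
      · exact h
      · have : j = n - 1 := by omega
        subst this
        exact absurd hj.2.symm hfake
  have hex : ∃ t, a ≤ (I.filter fun i => i ≤ t).card := by
    refine ⟨n, ?_⟩
    rw [filter_true_of_mem]
    · omega
    · intro i hi; have := (hIn i hi).1; omega
  obtain ⟨t, ht, hmin⟩ : ∃ t, a ≤ (I.filter fun i => i ≤ t).card ∧
      (I.filter fun i => i < t).card ≤ a := by
    refine ⟨Nat.find hex, Nat.find_spec hex, ?_⟩
    by_contra hc
    push Not at hc
    rcases Nat.eq_zero_or_pos (Nat.find hex) with h0 | h0
    · rw [h0] at hc; simp at hc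
    · refine Nat.find_min hex (m := Nat.find hex - 1) (by omega) (hc.le.trans (card_le_card ?_))
      intro i
      simp only [mem_filter]
      intro h; exact ⟨h.1, by omega⟩
  have hI2 : a ≤ (I.filter fun i => ¬ i < t).card := by
    have := card_filter_add_card_filter_not (s := I) (fun i => i < t)
    omega
  have hsplit := card_filter_add_card_filter_not (s := J) (fun i => i ≤ t)
  rcases Nat.lt_or_ge ((J.filter fun i => i ≤ t).card) a with hlt | hge
  · have hJ2 : a ≤ (J.filter fun i => ¬ i ≤ t).card := by omega
    obtain ⟨x, hx, y, hy, hxy⟩ := hedge ((I.filter fun i => i ≤ t).image fun i => p (i + 1))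
      ((J.filter fun i => ¬ i ≤ t).image fun i => p (i + 1)) (by
        rw [Finset.disjoint_left]
        intro x hx hy
        simp only [mem_image, mem_filter] at hx hy
        obtain ⟨i, ⟨hi, hit⟩, rfl⟩ := hx
        obtain ⟨j, ⟨hj, hjt⟩, hij⟩ := hy
        have := hinj _ _ (hJn j hj).2.1 (hIn i hi).1 hij
        omega) (by
        rwa [card_image_of_injOn]
        intro i hi i' hi' h
        simp only [coe_filter, Set.mem_setOf_eq] at hi hi'
        have := hinj _ _ (hIn i hi.1).1 (hIn i' hi'.1).1 h
        omega) (by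
        rwa [card_image_of_injOn]
        intro i hi i' hi' h
        simp only [coe_filter, Set.mem_setOf_eq] at hi hi'
        have := hinj _ _ (hJn i hi.1).2.1 (hJn i' hi'.1).2.1 h
        omega)
    simp only [mem_image, mem_filter] at hx hy
    obtain ⟨i, ⟨hi, hit⟩, rfl⟩ := hx
    obtain ⟨j, ⟨hj, hjt⟩, rfl⟩ := hy
    exact ⟨i, j, (hIn i hi).2, (hJn j hj).2.2, Or.inr ⟨by omega, (hJn j hj).2.1, hxy⟩⟩
  · obtain ⟨x, hx, y, hy, hxy⟩ := hedge ((I.filter fun i => ¬ i < t).image fun i => p (i + 1))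
      ((J.filter fun i => i ≤ t).image fun i => p (i - 1)) (by
        rw [Finset.disjoint_left]
        intro x hx hy
        simp only [mem_image, mem_filter] at hx hy
        obtain ⟨i, ⟨hi, hit⟩, rfl⟩ := hx
        obtain ⟨j, ⟨hj, hjt⟩, hij⟩ := hy
        have h1 := hJn j hj
        have := hinj _ _ (by omega) (hIn i hi).1 hij
        omega) (by
        rwa [card_image_of_injOn]
        intro i hi i' hi' h
        simp only [coe_filter, Set.mem_setOf_eq] at hi hi'
        have := hinj _ _ (hIn i hi.1).1 (hIn i' hi'.1).1 h
        omega) (by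
        rwa [card_image_of_injOn]
        intro i hi i' hi' h
        simp only [coe_filter, Set.mem_setOf_eq] at hi hi'
        have h1 := hJn i hi.1
        have h2 := hJn i' hi'.1
        have := hinj _ _ (by omega) (by omega) h
        omega)
    simp only [mem_image, mem_filter] at hx hy
    obtain ⟨i, ⟨hi, hit⟩, rfl⟩ := hx
    obtain ⟨j, ⟨hj, hjt⟩, rfl⟩ := hy
    exact ⟨i, j, (hIn i hi).2, (hJn j hj).2.2,
      Or.inl ⟨(hJn j hj).1, by omega, (hIn i hi).1, hxy⟩⟩

/-- consecutive edges of a list -/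
def pe {V : Type*} : List V → List (Sym2 V)
  | [] => []
  | [_] => []
  | x :: y :: t => s(x, y) :: pe (y :: t)

open scoped Classical in
/-- cyclically consecutive edges of a list -/
noncomputable def ce {V : Type*} (l : List V) : List (Sym2 V) :=
  if h : l ≠ [] then s(l.getLast h, l.head h) :: pe l else []

theorem ce_of_ne {V : Type*} (l : List V) (h : l ≠ []) :
    ce l = s(l.getLast h, l.head h) :: pe l := by simp [ce, h]

theorem pe_append {V : Type*} (P Q : List V) (hP : P ≠ []) (hQ : Q ≠ []) :
    pe (P ++ Q) = pe P ++ s(P.getLast hP, Q.head hQ) :: pe Q := by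
  induction P with
  | nil => exact absurd rfl hP
  | cons x t ih =>
    cases t with
    | nil =>
      cases Q with
      | nil => exact absurd rfl hQ
      | cons y Q => simp [pe]
    | cons y t =>
      have := ih (by simp)
      simp only [List.cons_append, pe] at this ⊢
      rw [this]; simp

theorem pe_reverse {V : Type*} (P : List V) : (pe P.reverse : Multiset (Sym2 V)) = pe P := by
  induction P with
  | nil => rfl
  | cons x t ih =>
    cases t with
    | nil => rfl
    | cons y t =>
      rw [List.reverse_cons, pe_append _ _ (by simp) (by simp)]
      simp only [pe, List.getLast_reverse, List.head_cons]
      rw [← Multiset.coe_add, ih, add_comm, Multiset.coe_add]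
      simp [Sym2.eq_swap]

theorem ce_append {V : Type*} (P Q : List V) (hP : P ≠ []) (hQ : Q ≠ []) :
    (ce (P ++ Q) : Multiset (Sym2 V)) = ↑(pe P) + ↑(pe Q) +
      (s(P.getLast hP, Q.head hQ) ::ₘ s(Q.getLast hQ, P.head hP) ::ₘ 0) := by
  rw [ce_of_ne _ (by simp [hP]), pe_append P Q hP hQ, List.getLast_append_of_ne_nil _ hQ,
    List.head_append_of_ne_nil hP]
  simp only [← Multiset.cons_coe, ← Multiset.coe_add, Multiset.add_cons, add_zero]
  rw [Multiset.cons_swap]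

theorem ce_rotate {V : Type*} (P Q : List V) :
    (ce (P ++ Q) : Multiset (Sym2 V)) = ce (Q ++ P) := by
  by_cases hP : P = []
  · simp [hP]
  by_cases hQ : Q = []
  · simp [hQ]
  rw [ce_append P Q hP hQ, ce_append Q P hQ hP, Multiset.cons_swap, add_comm (pe P : Multiset (Sym2 V))]

theorem ce_triple {V : Type*} (P Q R : List V) (hP : P ≠ []) (hQ : Q ≠ []) (hR : R ≠ []) :
    (ce (P ++ (Q ++ R)) : Multiset (Sym2 V)) = (↑(pe P) + ↑(pe Q) + ↑(pe R)) +
      (s(P.getLast hP, Q.head hQ) ::ₘ s(Q.getLast hQ, R.head hR) ::ₘ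
        s(R.getLast hR, P.head hP) ::ₘ 0) := by
  rw [ce_append P (Q ++ R) hP (by simp [hQ]), pe_append Q R hQ hR,
    List.getLast_append_of_ne_nil _ hR, List.head_append_of_ne_nil hQ]
  simp only [← Multiset.cons_coe, ← Multiset.coe_add, Multiset.add_cons, add_zero, add_assoc,
    Multiset.cons_inj_right]
  rw [Multiset.cons_swap]

theorem mem_pe_split {V : Type*} (l : List V) (e : Sym2 V) (he : e ∈ pe l) :
    ∃ A x y B, l = (A ++ [x]) ++ (y :: B) ∧ e = s(x, y) := by
  induction l with
  | nil => simp [pe] at he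
  | cons x t ih =>
    cases t with
    | nil => simp [pe] at he
    | cons y t =>
      simp only [pe, List.mem_cons] at he
      rcases he with rfl | he
      · exact ⟨[], x, y, t, rfl, rfl⟩
      · obtain ⟨A, x', y', B, h, rfl⟩ := ih he
        exact ⟨x :: A, x', y', B, by rw [h]; rfl, rfl⟩

theorem mem_ce_rotate {V : Type*} (l : List V) (e : Sym2 V) (he : e ∈ ce l) :
    ∃ (l' : List V) (h : l' ≠ []), l'.Perm l ∧ (ce l' : Multiset (Sym2 V)) = ce l ∧
      e = s(l'.getLast h, l'.head h) := by
  by_cases hl : l = []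
  · simp [ce, hl] at he
  rw [ce_of_ne l hl, List.mem_cons] at he
  rcases he with rfl | he
  · exact ⟨l, hl, List.Perm.refl _, rfl, rfl⟩
  · obtain ⟨A, x, y, B, rfl, rfl⟩ := mem_pe_split l e he
    refine ⟨(y :: B) ++ (A ++ [x]), by simp, List.perm_append_comm, ce_rotate _ _, ?_⟩
    simp

open scoped Classical in
theorem rot_step {V : Type*} [Fintype V] (L : SimpleGraph V) (a : ℕ) (ha : 1 ≤ a)
    (hdeg : ∀ v, 2 * a ≤ (univ.filter fun w => L.Adj v w).card)
    (hedge : ∀ S T : Finset V, Disjoint S T → a ≤ S.card → a ≤ T.card →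
      ∃ x ∈ S, ∃ y ∈ T, L.Adj x y)
    (l : List V) (hnd : l.Nodup) (hall : ∀ v, v ∈ l) (hf : ∃ e ∈ ce l, e ∉ L.edgeSet) :
    ∃ l' : List V, l'.Perm l ∧ ∃ F A : Multiset (Sym2 V), F.card = 3 ∧ A.card = 3 ∧
      (∀ e ∈ A, e ∈ L.edgeSet) ∧ (∃ e ∈ F, e ∉ L.edgeSet) ∧
      (ce l : Multiset (Sym2 V)) + A = (ce l' : Multiset (Sym2 V)) + F := by
  obtain ⟨e, he, heL⟩ := hf
  obtain ⟨l0, h0, hperm, hce, rfl⟩ := mem_ce_rotate l e he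
  have hnd0 : l0.Nodup := hperm.nodup_iff.2 hnd
  have hall0 : ∀ v, v ∈ l0 := fun v => hperm.mem_iff.2 (hall v)
  suffices h : ∃ l' : List V, l'.Perm l0 ∧ ∃ F A : Multiset (Sym2 V), F.card = 3 ∧ A.card = 3 ∧
      (∀ e ∈ A, e ∈ L.edgeSet) ∧ (∃ e ∈ F, e ∉ L.edgeSet) ∧
      (ce l0 : Multiset (Sym2 V)) + A = (ce l' : Multiset (Sym2 V)) + F by
    obtain ⟨l', hp, F, A, h1, h2, h3, h4, h5⟩ := h
    exact ⟨l', hp.trans hperm, F, A, h1, h2, h3, h4, by rw [← hce]; exact h5⟩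
  clear hce he hperm hnd hall l
  have hlen : 0 < l0.length := List.length_pos_of_ne_nil h0
  set u := l0.head h0 with hu
  set p : ℕ → V := fun i => l0.getD i u with hp
  have hpi : ∀ i (h : i < l0.length), p i = l0[i] := by
    intro i h; simp [hp, h]
  have hp0 : p 0 = u := by rw [hpi 0 hlen, hu, List.head_eq_getElem]
  have hpn : p (l0.length - 1) = l0.getLast h0 := by
    rw [hpi _ (by omega), List.getLast_eq_getElem]
  rw [SimpleGraph.mem_edgeSet] at heL
  obtain ⟨i, j, hvi, huj, h⟩ := rot_index L l0.length a ha p (by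
      intro i j hi hj hij
      rw [hpi i hi, hpi j hj] at hij
      exact (hnd0.getElem_inj_iff).1 hij) (by
      intro v
      obtain ⟨i, hi, rfl⟩ := List.getElem_of_mem (hall0 v)
      exact ⟨i, hi, hpi i hi⟩) hdeg hedge hlen (by rw [hp0, hpn]; exact heL)
  rw [hpn] at hvi
  rw [hp0] at huj
  rcases h with ⟨hj, hji, hi, hadj⟩ | ⟨hij, hj, hadj⟩
  · set P := l0.take j with hP
    set Q := (l0.drop j).take (i + 1 - j) with hQ
    set R := (l0.drop j).drop (i + 1 - j) with hR
    have hl : l0 = P ++ (Q ++ R) := by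
      rw [hP, hQ, hR, List.take_append_drop, List.take_append_drop]
    have hP0 : P ≠ [] := by
      rw [← List.length_pos_iff]; simp [hP]; omega
    have hQ0 : Q ≠ [] := by
      rw [← List.length_pos_iff]; simp [hQ]; omega
    have hR0 : R ≠ [] := by
      rw [← List.length_pos_iff]; simp [hR]; omega
    have e1 : P.head hP0 = u := by
      simp only [hu, hP, List.head_eq_getElem, List.getElem_take]
    have e2 : P.getLast hP0 = p (j - 1) := by
      rw [hpi _ (by omega), List.getLast_eq_getElem]
      simp only [hP, List.getElem_take, List.length_take]
      congr 1; omega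
    have e3 : Q.head hQ0 = p j := by
      rw [hpi _ (by omega), List.head_eq_getElem]
      simp [hQ]
    have e4 : Q.getLast hQ0 = p i := by
      rw [hpi _ (by omega), List.getLast_eq_getElem]
      simp only [hQ, List.getElem_take, List.getElem_drop, List.length_take, List.length_drop]
      congr 1; omega
    have e5 : R.head hR0 = p (i + 1) := by
      rw [hpi _ (by omega), List.head_eq_getElem]
      simp only [hR, List.getElem_drop]
      congr 1; omega
    have e6 : R.getLast hR0 = l0.getLast h0 := by
      simp [hR]
    refine ⟨P.reverse ++ (Q ++ R.reverse), ?_, s(p (j - 1), p j) ::ₘ s(p i, p (i + 1)) ::ₘ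
        s(l0.getLast h0, u) ::ₘ 0, s(u, p j) ::ₘ s(p i, l0.getLast h0) ::ₘ
        s(p (i + 1), p (j - 1)) ::ₘ 0, ?_, ?_, ?_, ?_, ?_⟩
    rotate_right
    · nth_rewrite 1 [hl]
      rw [ce_triple P Q R hP0 hQ0 hR0,
        ce_triple P.reverse Q R.reverse (by simpa using hP0) hQ0 (by simpa using hR0)]
      simp only [pe_reverse, List.getLast_reverse, List.head_reverse]
      rw [e1, e2, e3, e4, e5, e6]
      exact add_right_comm _ _ _
    · conv_rhs => rw [hl]
      exact (List.reverse_perm P).append ((List.Perm.refl Q).append (List.reverse_perm R))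
    · simp
    · simp
    · simp [SimpleGraph.mem_edgeSet, huj, hvi.symm, hadj]
    · exact ⟨s(l0.getLast h0, u), by simp, by simpa using heL⟩
  · set P := l0.take (i + 1) with hP
    set Q := (l0.drop (i + 1)).take (j - i) with hQ
    set R := (l0.drop (i + 1)).drop (j - i) with hR
    have hl : l0 = P ++ (Q ++ R) := by
      rw [hP, hQ, hR, List.take_append_drop, List.take_append_drop]
    have hP0 : P ≠ [] := by
      rw [← List.length_pos_iff]; simp [hP]; omega
    have hQ0 : Q ≠ [] := by
      rw [← List.length_pos_iff]; simp [hQ]; omega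
    have hR0 : R ≠ [] := by
      rw [← List.length_pos_iff]; simp [hR]; omega
    have e1 : P.head hP0 = u := by
      simp only [hu, hP, List.head_eq_getElem, List.getElem_take]
    have e2 : P.getLast hP0 = p i := by
      rw [hpi _ (by omega), List.getLast_eq_getElem]
      simp only [hP, List.getElem_take, List.length_take]
      congr 1; omega
    have e3 : Q.head hQ0 = p (i + 1) := by
      rw [hpi _ (by omega), List.head_eq_getElem]
      simp [hQ]
    have e4 : Q.getLast hQ0 = p j := by
      rw [hpi _ (by omega), List.getLast_eq_getElem]
      simp only [hQ, List.getElem_take, List.getElem_drop, List.length_take, List.length_drop]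
      congr 1; omega
    have e5 : R.head hR0 = p (j + 1) := by
      rw [hpi _ (by omega), List.head_eq_getElem]
      simp only [hR, List.getElem_drop]
      congr 1; omega
    have e6 : R.getLast hR0 = l0.getLast h0 := by
      simp [hR]
    refine ⟨R ++ (P.reverse ++ Q.reverse), ?_, s(p i, p (i + 1)) ::ₘ s(p j, p (j + 1)) ::ₘ
        s(l0.getLast h0, u) ::ₘ 0, s(l0.getLast h0, p i) ::ₘ s(u, p j) ::ₘ
        s(p (i + 1), p (j + 1)) ::ₘ 0, ?_, ?_, ?_, ?_, ?_⟩
    rotate_right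
    · nth_rewrite 1 [hl]
      rw [ce_triple P Q R hP0 hQ0 hR0,
        ce_triple R P.reverse Q.reverse hR0 (by simpa using hP0) (by simpa using hQ0)]
      simp only [pe_reverse, List.getLast_reverse, List.head_reverse]
      rw [e1, e2, e3, e4, e5, e6]
      rw [add_right_comm]
      congr 2
      rw [add_comm, add_assoc]
    · conv_rhs => rw [hl]
      refine List.perm_append_comm.trans ?_
      rw [List.append_assoc]
      exact (List.reverse_perm P).append ((List.reverse_perm Q).append (List.Perm.refl R))
    · simp
    · simp
    · simp [SimpleGraph.mem_edgeSet, huj, hvi, hadj]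
    · exact ⟨s(l0.getLast h0, u), by simp, by simpa using heL⟩

open scoped Classical in
theorem rot_main {V : Type*} [Fintype V] (L : SimpleGraph V) (a : ℕ) (ha : 1 ≤ a)
    (hdeg : ∀ v, 2 * a ≤ (univ.filter fun w => L.Adj v w).card)
    (hedge : ∀ S T : Finset V, Disjoint S T → a ≤ S.card → a ≤ T.card →
      ∃ x ∈ S, ∃ y ∈ T, L.Adj x y) (f : ℕ) :
    ∀ (l : List V), l.Nodup → (∀ v, v ∈ l) →
      (ce l : Multiset (Sym2 V)).countP (fun e => e ∉ L.edgeSet) ≤ f →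
    ∃ l' : List V, l'.Nodup ∧ (∀ v, v ∈ l') ∧ (∀ e ∈ ce l', e ∈ L.edgeSet) ∧
      ∃ A : Multiset (Sym2 V), A.card ≤ 3 * f ∧
      (ce l' : Multiset (Sym2 V)) ≤ (ce l : Multiset (Sym2 V)) + A := by
  induction f with
  | zero =>
    intro l hnd hall hf
    refine ⟨l, hnd, hall, ?_, 0, by simp, by simp⟩
    intro e he
    by_contra hc
    have := Multiset.countP_pos_of_mem (p := fun e => e ∉ L.edgeSet)
      (Multiset.mem_coe.2 he) hc
    omega
  | succ f ih =>
    intro l hnd hall hf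
    by_cases hfk : ∃ e ∈ ce l, e ∉ L.edgeSet
    · obtain ⟨l1, hp, F, A, hF, hA, hAL, ⟨e, heF, heL⟩, heq⟩ :=
        rot_step L a ha hdeg hedge l hnd hall hfk
      have hc := congrArg (Multiset.countP fun e => e ∉ L.edgeSet) heq
      rw [Multiset.countP_add, Multiset.countP_add] at hc
      have h1 : Multiset.countP (fun e => e ∉ L.edgeSet) A = 0 := by
        rw [Multiset.countP_eq_zero]
        intro e he; exact not_not.2 (hAL e he)
      have h2 := Multiset.countP_pos_of_mem (p := fun e => e ∉ L.edgeSet) heF heL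
      obtain ⟨l', h3, h4, h5, A', h6, h7⟩ := ih l1 (hp.nodup_iff.2 hnd)
        (fun v => hp.mem_iff.2 (hall v)) (by omega)
      refine ⟨l', h3, h4, h5, A + A', by rw [Multiset.card_add]; omega, ?_⟩
      refine h7.trans ?_
      rw [← add_assoc, heq]
      exact add_le_add_left (Multiset.le_add_right _ _) _
    · push Not at hfk
      exact ⟨l, hnd, hall, hfk, 0, by simp, by simp⟩

theorem pe_length {V : Type*} (l : List V) : (pe l).length = l.length - 1 := by
  induction l with
  | nil => rfl
  | cons x t ih =>
    cases t with
    | nil => rfl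
    | cons y t => simp [pe] at ih ⊢; omega

theorem pe_not_mem {V : Type*} (v : V) : ∀ (l : List V), v ∉ l → ∀ e ∈ pe l, v ∉ e := by
  intro l
  induction l with
  | nil => simp [pe]
  | cons x s ih =>
    cases s with
    | nil => simp [pe]
    | cons z s =>
      intro hv e he
      simp only [pe, List.mem_cons] at he
      rcases he with rfl | he
      · simp only [List.mem_cons, not_or] at hv
        simp [hv.1, hv.2.1]
      · exact ih (fun h => hv (List.mem_cons_of_mem _ h)) e he

/-- at most two neighbours along the cyclic list -/
theorem ce_deg {V : Type*} [DecidableEq V] [Fintype V] (l : List V) (hnd : l.Nodup) (v : V) :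
    (univ.filter fun w => s(v, w) ∈ ce l).card ≤ 2 := by
  by_cases hv : v ∈ l
  · obtain ⟨A, B, rfl⟩ := List.append_of_mem hv
    have hrot := ce_rotate A (v :: B)
    have hmem : ∀ e, e ∈ ce (A ++ v :: B) ↔ e ∈ ce (v :: (B ++ A)) := by
      intro e
      have := congrArg (fun M => e ∈ M) hrot
      simpa using this
    simp only [hmem]
    have hnd' : (v :: (B ++ A)).Nodup := by
      refine (List.Perm.nodup_iff ?_).2 hnd
      exact (List.perm_append_comm (l₁ := A) (l₂ := v :: B)).symm
    generalize B ++ A = t at hnd'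
    cases t with
    | nil =>
      have : (univ.filter fun w => s(v, w) ∈ ce [v]) ⊆ {v} := by
        intro w; simp [ce, pe]
      exact (card_le_card this).trans (by simp)
    | cons y t =>
      have : (univ.filter fun w => s(v, w) ∈ ce (v :: y :: t)) ⊆
          {(v :: y :: t).getLast (by simp), y} := by
        intro w hw
        simp only [mem_filter, mem_univ, true_and] at hw
        rw [ce_of_ne _ (by simp)] at hw
        simp only [pe, List.mem_cons, List.head_cons] at hw
        have hvy : v ∉ y :: t := (List.nodup_cons.1 hnd').1
        rcases hw with hw | hw | hw
        · rw [Sym2.eq_iff] at hw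
          rcases hw with ⟨h1, h2⟩ | ⟨h1, h2⟩
          · exfalso; rw [List.getLast_cons (by simp)] at h1
            exact hvy (h1 ▸ List.getLast_mem _)
          · simp [h2]
        · rw [Sym2.eq_iff] at hw
          rcases hw with ⟨h1, h2⟩ | ⟨h1, h2⟩
          · simp [h2]
          · exfalso; exact hvy (h1 ▸ by simp)
        · exact absurd (Sym2.mem_mk_left v w) (pe_not_mem v _ hvy _ hw)
      exact (card_le_card this).trans Finset.card_le_two
  · have : (univ.filter fun w => s(v, w) ∈ ce l) = ∅ := by
      rw [Finset.filter_eq_empty_iff]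
      intro w _ hw
      by_cases hl : l = []
      · simp [ce, hl] at hw
      obtain ⟨l', h, hp, -, he⟩ := mem_ce_rotate l _ hw
      have : v ∈ s(l'.getLast h, l'.head h) := he ▸ Sym2.mem_mk_left v w
      rw [Sym2.mem_iff] at this
      rcases this with h1 | h1
      · exact hv (hp.mem_iff.1 (h1 ▸ List.getLast_mem _))
      · exact hv (hp.mem_iff.1 (h1 ▸ List.head_mem _))
    rw [this]; simp

theorem pe_walk {V : Type*} (G : SimpleGraph V) : ∀ (l : List V) (x : V),
    (∀ e ∈ pe (x :: l), e ∈ G.edgeSet) →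
    ∃ w : G.Walk x ((x :: l).getLast (by simp)), w.support = x :: l ∧ w.edges = pe (x :: l) := by
  intro l
  induction l with
  | nil => intro x _; exact ⟨SimpleGraph.Walk.nil, by simp, by simp [pe]⟩
  | cons y t ih =>
    intro x h
    obtain ⟨w, h1, h2⟩ := ih y (fun e he => h e (by simp [pe, he]))
    have hxy : G.Adj x y := by
      rw [← SimpleGraph.mem_edgeSet]; exact h _ (by simp [pe])
    refine ⟨SimpleGraph.Walk.cons hxy (w.copy rfl (by simp)), ?_, ?_⟩
    · simp [h1]
    · simp [h2, pe]

open scoped Classical in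
theorem ham_of_list {V : Type*} [Fintype V] (G : SimpleGraph V) (l : List V) (hnd : l.Nodup)
    (hall : ∀ v, v ∈ l) (hG : ∀ e ∈ ce l, e ∈ G.edgeSet) (h3 : 3 ≤ Fintype.card V) :
    ∃ (a : V) (w : G.Walk a a), w.IsHamiltonianCycle ∧ (ce l).toFinset = w.edges.toFinset := by
  have hlen : l.length = Fintype.card V := by
    rw [← List.toFinset_card_of_nodup hnd, ← Finset.card_univ]
    congr 1; ext v; simp [hall v]
  match l, hnd, hall, hG, hlen with
  | [], _, _, _, hlen => simp at hlen; omega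
  | x :: t, hnd, hall, hG, hlen =>
    rw [ce_of_ne _ (by simp)] at hG ⊢
    obtain ⟨w, h1, h2⟩ := pe_walk G t x (fun e he => hG e (by simp [he]))
    have hadj : G.Adj ((x :: t).getLast (by simp)) x := by
      rw [← SimpleGraph.mem_edgeSet]; exact hG _ (by simp)
    refine ⟨_, SimpleGraph.Walk.cons hadj w, ?_, ?_⟩
    · rw [SimpleGraph.Walk.isHamiltonianCycle_iff_isCycle_and_length_eq]
      constructor
      · rw [SimpleGraph.Walk.cons_isCycle_iff]
        refine ⟨by rw [SimpleGraph.Walk.isPath_def, h1]; exact hnd, ?_⟩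
        rw [h2]
        match t, hnd, hlen with
        | [], _, hlen => simp at hlen; omega
        | [y], _, hlen => simp at hlen; omega
        | y :: z :: t, hnd, _ =>
          intro hmem
          have hx : x ∉ y :: z :: t := (List.nodup_cons.1 hnd).1
          have hy : y ∉ z :: t := (List.nodup_cons.1 (List.nodup_cons.1 hnd).2).1
          rw [pe, List.mem_cons] at hmem
          rcases hmem with hm | hm
          · rw [Sym2.eq_iff] at hm
            rcases hm with ⟨h1, h2⟩ | ⟨h1, -⟩
            · exact hx (h2 ▸ by simp)
            · apply hy
              rw [← h1, List.getLast_cons (by simp), List.getLast_cons (by simp)]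
              exact List.getLast_mem _
          · exact pe_not_mem x _ hx _ hm (Sym2.mem_mk_right _ _)
      · have := congrArg List.length h1
        rw [SimpleGraph.Walk.length_support] at this
        rw [SimpleGraph.Walk.length_cons]; omega
    · simp [h2]

open scoped Classical in
theorem sequential {V J : Type*} [Fintype V] [Fintype J] (G : SimpleGraph V) (Hs : Set (Sym2 V))
    (hHG : Hs ⊆ G.edgeSet) (a p : ℕ) (ha : 1 ≤ a) (l : J → List V)
    (hnd : ∀ j, (l j).Nodup) (hall : ∀ j v, v ∈ l j) (E0 : J → Set (Sym2 V))
    (hE0 : ∀ i j, i ≠ j → Disjoint (E0 i) (E0 j)) (hE0G : ∀ j, E0 j ⊆ G.edgeSet)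
    (hE0H : ∀ j, Disjoint (E0 j) Hs)
    (hcost : ∀ j, (ce (l j) : Multiset (Sym2 V)).countP (fun e => e ∉ E0 j) ≤ p)
    (hdeg : ∀ v, 2 * a + 2 * Fintype.card J ≤ (univ.filter fun w => G.Adj v w).card)
    (hH : ∀ S T : Finset V, Disjoint S T → a ≤ S.card → a ≤ T.card →
      4 * p * Fintype.card J < ((S ×ˢ T).filter fun e => s(e.1, e.2) ∈ Hs).card)
    (s : Finset J) :
    ∃ E : J → Finset (Sym2 V), (∀ j v, (univ.filter fun w => s(v, w) ∈ E j).card ≤ 2) ∧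
      (∀ i j, i ≠ j → Disjoint (E i) (E j)) ∧
      (∀ j, ((E j).filter fun e => e ∈ Hs).card ≤ 4 * p) ∧
      (∀ j, j ∉ s → E j = (ce (l j)).toFinset.filter fun e => e ∈ E0 j) ∧
      (∀ j ∈ s, ∃ l' : List V, l'.Nodup ∧ (∀ v, v ∈ l') ∧ (∀ e ∈ ce l', e ∈ G.edgeSet) ∧
        E j = (ce l').toFinset) := by
  induction s using Finset.induction_on with
  | empty =>
    refine ⟨fun j => (ce (l j)).toFinset.filter fun e => e ∈ E0 j, ?_, ?_, ?_, ?_, ?_⟩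
    · intro j v
      refine le_trans (card_le_card ?_) (ce_deg (l j) (hnd j) v)
      intro w hw
      simp only [mem_filter, mem_univ, true_and, List.mem_toFinset] at hw ⊢
      exact hw.1
    · intro i j hij
      rw [Finset.disjoint_left]
      intro e he he'
      exact Set.disjoint_left.1 (hE0 i j hij) (mem_filter.1 he).2 (mem_filter.1 he').2
    · intro j
      have : (((ce (l j)).toFinset.filter fun e => e ∈ E0 j).filter fun e => e ∈ Hs) = ∅ := by
        rw [Finset.filter_eq_empty_iff]
        intro e he
        exact Set.disjoint_left.1 (hE0H j) (mem_filter.1 he).2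
      rw [this]; simp
    · intro j _; rfl
    · intro j hj; simp at hj
  | insert j s hj ih =>
    obtain ⟨E, h1, h2, h3, h4, h5⟩ := ih
    set U : Finset (Sym2 V) := (univ.erase j).biUnion E with hU
    obtain ⟨L, hLe⟩ : ∃ L : SimpleGraph V, ∀ e, e ∈ L.edgeSet ↔ e ∈ G.edgeSet ∧ e ∉ U := by
      refine ⟨G.deleteEdges (U : Set (Sym2 V)), ?_⟩
      intro e; rw [SimpleGraph.edgeSet_deleteEdges]; simp
    have hLadj : ∀ x y, L.Adj x y ↔ G.Adj x y ∧ s(x, y) ∉ U := by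
      intro x y; rw [← SimpleGraph.mem_edgeSet, hLe, SimpleGraph.mem_edgeSet]
    have hcL : ∀ e ∈ ce (l j), e ∈ E0 j → e ∈ L.edgeSet := by
      intro e he heE
      rw [hLe]
      refine ⟨hE0G j heE, ?_⟩
      intro hu
      simp only [hU, mem_biUnion, mem_erase, mem_univ, and_true] at hu
      obtain ⟨i, hij, hi⟩ := hu
      refine Finset.disjoint_left.1 (h2 i j hij) hi ?_
      rw [h4 j hj]; simp [he, heE]
    obtain ⟨l', hnd', hall', hL', A, hA, hle⟩ := rot_main L a ha (by
        intro v
        have hsub : (univ.filter fun w => G.Adj v w) ⊆ (univ.filter fun w => L.Adj v w) ∪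
            (univ : Finset J).biUnion fun i => univ.filter fun w => s(v, w) ∈ E i := by
          intro w hw
          simp only [mem_filter, mem_univ, true_and, mem_union, mem_biUnion] at hw ⊢
          by_cases hu : s(v, w) ∈ U
          · right
            simp only [hU, mem_biUnion] at hu
            obtain ⟨i, -, hi⟩ := hu
            exact ⟨i, hi⟩
          · left; exact (hLadj v w).2 ⟨hw, hu⟩
        have c1 := (card_le_card hsub).trans (card_union_le _ _)
        have c2 : ((univ : Finset J).biUnion fun i => univ.filter fun w => s(v, w) ∈ E i).card
            ≤ Fintype.card J * 2 := by
          refine Finset.card_biUnion_le_card_mul _ _ _ ?_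
          intro i _; exact h1 i v
        have := hdeg v
        omega) (by
        intro S T hST hS hT
        by_contra hno
        push Not at hno
        have hlt := hH S T hST hS hT
        have hinj : Set.InjOn (fun e : V × V => s(e.1, e.2))
            (((S ×ˢ T).filter fun e => s(e.1, e.2) ∈ Hs : Finset (V × V)) : Set (V × V)) := by
          rintro ⟨x, y⟩ hx ⟨x', y'⟩ hx' he
          simp only [coe_filter, mem_product, Set.mem_ofPred_eq] at hx hx'
          rw [Sym2.eq_iff] at he
          rcases he with ⟨r1, r2⟩ | ⟨r1, r2⟩
          · exact Prod.ext r1 r2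
          · simp only at r1 r2
            exact absurd (r1 ▸ hx.1.1) (fun h => Finset.disjoint_left.1 hST h hx'.1.2)
        rw [← Finset.card_image_of_injOn hinj] at hlt
        have hsub : (((S ×ˢ T).filter fun e => s(e.1, e.2) ∈ Hs).image fun e => s(e.1, e.2)) ⊆
            (univ : Finset J).biUnion fun i => (E i).filter fun e => e ∈ Hs := by
          intro e he
          simp only [mem_image, mem_filter, mem_product] at he
          obtain ⟨⟨x, y⟩, ⟨⟨hx, hy⟩, hxy⟩, rfl⟩ := he
          have hG : G.Adj x y := (SimpleGraph.mem_edgeSet _).1 (hHG hxy)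
          have hu : s(x, y) ∈ U := by
            by_contra hu
            exact hno x hx y hy ((hLadj x y).2 ⟨hG, hu⟩)
          simp only [hU, mem_biUnion] at hu
          obtain ⟨i, -, hi⟩ := hu
          simp only [mem_biUnion, mem_filter, mem_univ, true_and]
          exact ⟨i, hi, hxy⟩
        have c1 := card_le_card hsub
        have c2 : ((univ : Finset J).biUnion fun i => (E i).filter fun e => e ∈ Hs).card
            ≤ Fintype.card J * (4 * p) := Finset.card_biUnion_le_card_mul _ _ _ (fun i _ => h3 i)
        rw [mul_comm] at c2
        omega) p (l j) (hnd j) (hall j) (by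
        refine le_trans ?_ (hcost j)
        rw [Multiset.countP_eq_card_filter, Multiset.countP_eq_card_filter]
        refine Multiset.card_le_card ?_
        rw [Multiset.le_filter]
        refine ⟨Multiset.filter_le _ _, ?_⟩
        intro e he
        rw [Multiset.mem_filter] at he
        exact fun h => he.2 (hcL e (Multiset.mem_coe.1 he.1) h))
    refine ⟨Function.update E j (ce l').toFinset, ?_, ?_, ?_, ?_, ?_⟩
    · intro i v
      by_cases hij : i = j
      · subst hij
        simp only [Function.update_self, List.mem_toFinset]
        exact ce_deg l' hnd' v
      · simp only [Function.update_of_ne hij]; exact h1 i v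
    · have key : ∀ i, i ≠ j → Disjoint (E i) (ce l').toFinset := by
        intro i hij
        rw [Finset.disjoint_left]
        intro e he he'
        rw [List.mem_toFinset] at he'
        refine ((hLe e).1 (hL' e he')).2 ?_
        simp only [hU, mem_biUnion, mem_erase, mem_univ, and_true]
        exact ⟨i, hij, he⟩
      intro i i' hii
      by_cases hi : i = j
      · subst hi
        rw [Function.update_self, Function.update_of_ne hii.symm]
        exact (key i' hii.symm).symm
      · by_cases hi' : i' = j
        · subst hi'
          rw [Function.update_self, Function.update_of_ne hi]
          exact key i hi
        · rw [Function.update_of_ne hi, Function.update_of_ne hi']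
          exact h2 i i' hii
    · intro i
      by_cases hij : i = j
      · subst hij
        rw [Function.update_self]
        have c1 : ((ce l').toFinset.filter fun e => e ∈ Hs).card ≤
            (ce l' : Multiset (Sym2 V)).countP fun e => e ∈ Hs := by
          rw [Multiset.countP_eq_card_filter]
          refine le_trans (le_of_eq ?_) (Multiset.toFinset_card_le _)
          congr 1
          ext e
          simp
        have c2 := Multiset.countP_le_of_le (fun e => e ∈ Hs) hle
        rw [Multiset.countP_add] at c2
        have c3 := Multiset.countP_le_card (fun e => e ∈ Hs) A
        have c4 : (ce (l i) : Multiset (Sym2 V)).countP (fun e => e ∈ Hs) ≤ p := by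
          refine le_trans ?_ (hcost i)
          rw [Multiset.countP_eq_card_filter, Multiset.countP_eq_card_filter]
          refine Multiset.card_le_card ?_
          rw [Multiset.le_filter]
          refine ⟨Multiset.filter_le _ _, ?_⟩
          intro e he
          rw [Multiset.mem_filter] at he
          exact fun h => Set.disjoint_left.1 (hE0H i) h he.2
        omega
      · rw [Function.update_of_ne hij]; exact h3 i
    · intro i hi
      simp only [mem_insert, not_or] at hi
      rw [Function.update_of_ne hi.1]; exact h4 i hi.2
    · intro i hi
      by_cases hij : i = j
      · subst hij
        rw [Function.update_self]
        exact ⟨l', hnd', hall', fun e he => ((hLe e).1 (hL' e he)).1, rfl⟩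
      · rw [Function.update_of_ne hij]
        exact h5 i ((mem_insert.1 hi).resolve_left hij)

open scoped Classical in
theorem exists_color {V J : Type*} [Fintype V] [Fintype J] (P : J → Finset (V × V))
    (hinj : ∀ j, Set.InjOn (fun e : V × V => s(e.1, e.2)) (P j)) (M : ℕ) (hM : 0 < M)
    (N lam : J → ℝ) (hN : ∀ j, 0 < N j) (hPN : ∀ j, ((P j).card : ℝ) ≤ N j)
    (hl0 : ∀ j, 0 ≤ lam j) (hlN : ∀ j, lam j ≤ N j)
    (hsum : ∑ j, 2 * Real.exp (-(lam j) ^ 2 / (4 * N j)) < 1) :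
    ∃ F : Set (Sym2 V), ∀ j,
      |(((P j).filter fun e => s(e.1, e.2) ∈ F).card : ℝ) - (P j).card / M| ≤ lam j := by
  have : NeZero M := ⟨hM.ne'⟩
  set Im : J → Finset (Sym2 V) := fun j => (P j).image fun e => s(e.1, e.2) with hIm
  have hcard : ∀ j, (Im j).card = (P j).card := fun j => card_image_of_injOn (hinj j)
  obtain ⟨f, hf⟩ := exists_good (ι := Sym2 V) (κ := Fin M) (J := J)
    (fun j e c => if e ∈ Im j ∧ c = 0 then (1 : ℝ) else 0)
    (by intro j e c; split_ifs <;> norm_num)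
    (by intro j e c; split_ifs <;> norm_num)
    Im (by intro j e he c; simp [he]) N lam hN
    (by intro j; rw [hcard]; exact hPN j) hl0 hlN hsum
  obtain ⟨F, hFf⟩ : ∃ F : Set (Sym2 V), ∀ e, e ∈ F ↔ f e = 0 := ⟨{e | f e = 0}, fun _ => Iff.rfl⟩
  refine ⟨F, fun j => ?_⟩
  have := hf j
  have e1 : ∑ e, (if e ∈ Im j ∧ f e = 0 then (1 : ℝ) else 0) =
      (((P j).filter fun e => s(e.1, e.2) ∈ F).card : ℝ) := by
    rw [Finset.sum_boole]
    have : (univ.filter fun e => e ∈ Im j ∧ f e = 0) =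
        ((P j).filter fun e => s(e.1, e.2) ∈ F).image
          fun e => s(e.1, e.2) := by
      ext e
      simp only [mem_filter, mem_univ, true_and, hIm, mem_image, hFf]
      constructor
      · rintro ⟨⟨q, hq, rfl⟩, h⟩; exact ⟨q, ⟨hq, h⟩, rfl⟩
      · rintro ⟨q, ⟨hq, h⟩, rfl⟩; exact ⟨⟨q, hq, rfl⟩, h⟩
    rw [this, card_image_of_injOn]
    exact (hinj j).mono (by intro q; simp; tauto)
  have e2 : ∑ e, (∑ c : Fin M, (if e ∈ Im j ∧ c = 0 then (1 : ℝ) else 0)) / (Fintype.card (Fin M)) =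
      (P j).card / M := by
    rw [← Finset.sum_div, Fintype.card_fin]
    congr 1
    rw [← hcard j]
    have : ∀ e : Sym2 V, (∑ c : Fin M, (if e ∈ Im j ∧ c = 0 then (1 : ℝ) else 0)) =
        if e ∈ Im j then 1 else 0 := by
      intro e
      by_cases h : e ∈ Im j <;> simp [h]
    simp [this]
  rw [e1, e2] at this
  exact this

theorem exp_neg_le_of_log {n x : ℝ} (hn : 0 < n) (k : ℕ) (h : k * Real.log n ≤ x) :
    Real.exp (-x) ≤ (n ^ k)⁻¹ := by
  rw [Real.exp_neg]
  refine inv_anti₀ (by positivity) ?_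
  rw [← Real.log_le_iff_le_exp (by positivity), Real.log_pow]
  exact h

set_option maxHeartbeats 1000000 in
open scoped Classical in
theorem split_H {V : Type*} [Fintype V] (n : ℕ) (hV : Fintype.card V = n) (G : SimpleGraph V)
    (α ε : ℝ) (hε : 0 < ε) (hα : 10 ^ 4 * ε ≤ α) (hα1 : α < 1)
    (hlog : 10 ^ 11 * Real.log n ≤ ε ^ 5 * n) (hl1 : 2 ≤ Real.log n)
    (hQa : ∀ v, (α - ε) * (n : ℝ) ≤ ((univ.filter fun w => G.Adj v w).card : ℝ))
    (hQb : ∀ S T : Finset V, Disjoint S T → ε * (n : ℝ) ≤ (S.card : ℝ) → ε * (n : ℝ) ≤ (T.card : ℝ) →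
      |(((S ×ˢ T).filter fun e => G.Adj e.1 e.2).card : ℝ) / ((S.card : ℝ) * (T.card : ℝ)) - α| ≤ ε) :
    ∃ (B : SimpleGraph V) (Hs : Set (Sym2 V)), Hs ⊆ G.edgeSet ∧ B.edgeSet ⊆ G.edgeSet ∧
      Disjoint B.edgeSet Hs ∧
      (∀ v, (α - 3 * ε) * (n : ℝ) ≤ ((univ.filter fun w => B.Adj v w).card : ℝ)) ∧
      (∀ S T : Finset V, Disjoint S T → ε * (n : ℝ) ≤ (S.card : ℝ) → ε * (n : ℝ) ≤ (T.card : ℝ) →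
        (α - 3 * ε) * ((S.card : ℝ) * (T.card : ℝ)) ≤
          (((S ×ˢ T).filter fun e => B.Adj e.1 e.2).card : ℝ) ∧
        ε / 2 * ((S.card : ℝ) * (T.card : ℝ)) ≤
          (((S ×ˢ T).filter fun e => s(e.1, e.2) ∈ Hs).card : ℝ)) := by
  have hn : 0 < n := by
    rcases Nat.eq_zero_or_pos n with h | h
    · subst h; simp at hl1; norm_num at hl1
    · exact h
  have hnR : (0 : ℝ) < n := by exact_mod_cast hn
  have hn7 : (7 : ℝ) ≤ n := by
    have h1 : Real.exp 2 ≤ n := (Real.le_log_iff_exp_le hnR).1 hl1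
    have h2 : Real.exp 2 = Real.exp 1 * Real.exp 1 := by rw [← Real.exp_add]; norm_num
    nlinarith [Real.exp_one_gt_d9]
  have hε1 : ε ≤ 10⁻¹ ^ 4 := by norm_num; linarith
  set M := ⌈α / ε⌉₊ with hMdef
  have hαε : 10 ^ 4 ≤ α / ε := by rw [le_div_iff₀ hε]; exact hα
  have hM1 : α / ε ≤ M := Nat.le_ceil _
  have hM2 : (M : ℝ) < α / ε + 1 := Nat.ceil_lt_add_one (by positivity)
  have hMpos : (0 : ℝ) < M := by linarith
  have hM0 : 0 < M := by exact_mod_cast hMpos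
  have hαpos : 0 < α := by linarith
  have hMinv1 : 1 / (M : ℝ) ≤ ε / α := by
    rw [div_le_div_iff₀ hMpos hαpos]
    rw [div_le_iff₀ hε] at hM1; linarith
  have hMinv2 : 0.99 * ε / α ≤ 1 / (M : ℝ) := by
    rw [div_le_div_iff₀ hαpos hMpos]
    have : (M : ℝ) * ε ≤ α + ε := by
      have := mul_le_mul_of_nonneg_right hM2.le hε.le
      rwa [add_mul, div_mul_cancel₀ _ hε.ne', one_mul] at this
    nlinarith
  set Bg : Type _ := {q : Finset V × Finset V // Disjoint q.1 q.2 ∧ ε * (n : ℝ) ≤ (q.1.card : ℝ) ∧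
    ε * (n : ℝ) ≤ (q.2.card : ℝ)} with hBg
  have hεn : 0 < ε * n := by positivity
  have hlogn : Real.log n ≤ n := (Real.log_le_sub_one_of_pos hnR).trans (by linarith)
  obtain ⟨F, hF⟩ := exists_color (V := V) (J := V ⊕ Bg)
    (fun j => match j with
      | Sum.inl v => ({v} ×ˢ univ : Finset (V × V)).filter fun e => G.Adj e.1 e.2
      | Sum.inr q => (q.1.1 ×ˢ q.1.2).filter fun e => G.Adj e.1 e.2)
    (by
      rintro (v | ⟨⟨S, T⟩, hST, -, -⟩)
      · rintro ⟨x, y⟩ hx ⟨x', y'⟩ hx' he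
        simp only [coe_filter, mem_product, mem_singleton, mem_univ, and_true, Set.mem_ofPred_eq] at hx hx'
        obtain ⟨rfl, -⟩ := hx
        obtain ⟨rfl, -⟩ := hx'
        rw [Sym2.eq_iff] at he
        rcases he with ⟨r1, r2⟩ | ⟨r1, r2⟩
        · exact Prod.ext r1 r2
        · simp only at r1 r2
          rw [r2, r1]
      · rintro ⟨x, y⟩ hx ⟨x', y'⟩ hx' he
        simp only [coe_filter, mem_product, Set.mem_ofPred_eq] at hx hx'
        rw [Sym2.eq_iff] at he
        rcases he with ⟨r1, r2⟩ | ⟨r1, r2⟩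
        · exact Prod.ext r1 r2
        · simp only at r1 r2 hST
          exact absurd (r1 ▸ hx.1.1) (fun h => Finset.disjoint_left.1 hST h hx'.1.2))
    M hM0
    (fun j => match j with
      | Sum.inl _ => n
      | Sum.inr q => (q.1.1.card : ℝ) * q.1.2.card)
    (fun j => match j with
      | Sum.inl _ => ε / 2 * n
      | Sum.inr q => ε / 10 * ((q.1.1.card : ℝ) * q.1.2.card))
    (by
      rintro (v | ⟨⟨S, T⟩, hST, h1, h2⟩)
      · exact hnR
      · have := hεn.trans_le h1
        have := hεn.trans_le h2
        dsimp only at *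
        positivity)
    (by
      rintro (v | ⟨⟨S, T⟩, hST, h1, h2⟩)
      · refine Nat.cast_le.2 ((card_filter_le _ _).trans ?_)
        simp [hV]
      · dsimp only
        rw [← Nat.cast_mul, ← card_product]
        exact Nat.cast_le.2 (card_filter_le _ _))
    (by
      rintro (v | ⟨⟨S, T⟩, hST, h1, h2⟩) <;> dsimp only <;> positivity)
    (by
      rintro (v | ⟨⟨S, T⟩, hST, h1, h2⟩) <;> dsimp only
      · nlinarith
      · have : 0 ≤ (S.card : ℝ) * T.card := by positivity
        norm_num at hε1
        nlinarith)
    (by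
      rw [Fintype.sum_sum_type]
      have hp5 : ε ^ 5 ≤ ε ^ 2 := pow_le_pow_of_le_one hε.le (by norm_num at hε1; linarith) (by norm_num)
      have hp4 : ε ^ 5 ≤ ε ^ 4 := pow_le_pow_of_le_one hε.le (by norm_num at hε1; linarith) (by norm_num)
      have s1 : ∀ v : V, 2 * Real.exp (-(ε / 2 * n) ^ 2 / (4 * n)) ≤ 2 * ((n : ℝ) ^ 3)⁻¹ := by
        intro v
        refine mul_le_mul_of_nonneg_left ?_ (by norm_num)
        have : -(ε / 2 * n) ^ 2 / (4 * n) = -(ε ^ 2 * n / 16) := by field_simp; ring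
        rw [this]
        refine exp_neg_le_of_log hnR 3 ?_
        have := mul_le_mul_of_nonneg_right hp5 hnR.le
        push_cast
        linarith
      have s2 : ∀ q : Bg, 2 * Real.exp (-(ε / 10 * ((q.1.1.card : ℝ) * q.1.2.card)) ^ 2 /
          (4 * ((q.1.1.card : ℝ) * q.1.2.card))) ≤ 2 * Real.exp (-(3 * n)) := by
        rintro ⟨⟨S, T⟩, hST, h1, h2⟩
        dsimp only at *
        refine mul_le_mul_of_nonneg_left (Real.exp_le_exp.2 ?_) (by norm_num)
        have hs := hεn.trans_le h1
        have ht := hεn.trans_le h2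
        have : -(ε / 10 * ((S.card : ℝ) * T.card)) ^ 2 / (4 * ((S.card : ℝ) * T.card)) =
          -(ε ^ 2 * (S.card * T.card) / 400) := by field_simp; ring
        rw [this, neg_le_neg_iff]
        have h3 : (ε * n) * (ε * n) ≤ S.card * T.card := mul_le_mul h1 h2 hεn.le hs.le
        have h4 : ε ^ 2 * ((ε * n) * (ε * n)) ≤ ε ^ 2 * (S.card * T.card) :=
          mul_le_mul_of_nonneg_left h3 (by positivity)
        have h5 : ε ^ 2 * ((ε * n) * (ε * n)) = (ε ^ 4 * n) * n := by ring
        have h6 : 1200 ≤ ε ^ 4 * n := by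
          have := mul_le_mul_of_nonneg_right hp4 hnR.le
          linarith
        have h7 := mul_le_mul_of_nonneg_right h6 hnR.le
        linarith
      have t1 := Finset.sum_le_sum fun v (_ : v ∈ (univ : Finset V)) => s1 v
      have t2 := Finset.sum_le_sum fun v (_ : v ∈ (univ : Finset Bg)) => s2 v
      refine (add_le_add t1 t2).trans_lt ?_
      rw [sum_const, sum_const, card_univ, hV, nsmul_eq_mul, nsmul_eq_mul]
      have c1 : ((univ : Finset Bg).card : ℝ) ≤ Real.exp 2 ^ n := by
        have : (univ : Finset Bg).card ≤ 2 ^ n * 2 ^ n := by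
          rw [card_univ]
          refine (Fintype.card_subtype_le _).trans ?_
          rw [Fintype.card_prod, Fintype.card_finset, hV]
        have h2 : ((univ : Finset Bg).card : ℝ) ≤ 2 ^ n * 2 ^ n := by exact_mod_cast this
        refine h2.trans ?_
        rw [← mul_pow]
        refine pow_le_pow_left₀ (by norm_num) ?_ _
        have h2 : Real.exp 2 = Real.exp 1 * Real.exp 1 := by rw [← Real.exp_add]; norm_num
        nlinarith [Real.exp_one_gt_d9]
      have c2 : ((univ : Finset Bg).card : ℝ) * (2 * Real.exp (-(3 * n))) ≤ 2 * Real.exp (-n) := by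
        rw [← Real.exp_nat_mul] at c1
        have := mul_le_mul_of_nonneg_right c1 (Real.exp_pos (-(3 * n))).le
        rw [← Real.exp_add] at this
        have e : (n : ℝ) * 2 + -(3 * n) = -n := by ring
        rw [e] at this
        linarith
      have c3 : Real.exp (-n) ≤ ((n : ℝ) ^ 1)⁻¹ := by
        refine exp_neg_le_of_log hnR 1 ?_
        simpa using hlogn
      have c4 : (n : ℝ) * (2 * ((n : ℝ) ^ 3)⁻¹) ≤ 2 * (n : ℝ)⁻¹ := by
        have : (n : ℝ) * (2 * ((n : ℝ) ^ 3)⁻¹) = 2 * (n : ℝ)⁻¹ * (n : ℝ)⁻¹ := by field_simp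
        rw [this]
        refine mul_le_of_le_one_right (by positivity) (inv_le_one_of_one_le₀ (by linarith))
      rw [pow_one] at c3
      have c5 : (n : ℝ)⁻¹ ≤ 7⁻¹ := inv_anti₀ (by norm_num) hn7
      norm_num at c5
      linarith)
  obtain ⟨B, hBe⟩ : ∃ B : SimpleGraph V, B.edgeSet = G.edgeSet \ F :=
    ⟨G.deleteEdges F, SimpleGraph.edgeSet_deleteEdges F⟩
  have hB : ∀ x y, B.Adj x y ↔ G.Adj x y ∧ s(x, y) ∉ F := by
    intro x y
    rw [← SimpleGraph.mem_edgeSet, hBe, Set.mem_sdiff, SimpleGraph.mem_edgeSet]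
  obtain ⟨Hs, hHs⟩ : ∃ Hs : Set (Sym2 V), Hs = G.edgeSet ∩ F := ⟨_, rfl⟩
  have hcount : ∀ R : Finset (V × V), ((R.filter fun e => B.Adj e.1 e.2).card : ℝ) +
      ((R.filter fun e => G.Adj e.1 e.2).filter fun e => s(e.1, e.2) ∈ F).card =
      ((R.filter fun e => G.Adj e.1 e.2).card : ℝ) := by
    intro R
    have h1 := card_filter_add_card_filter_not (s := R.filter fun e => G.Adj e.1 e.2)
      (fun e => s(e.1, e.2) ∈ F)
    rw [← h1, Nat.cast_add, add_comm]
    congr 3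
    rw [filter_filter]
    exact filter_congr fun e _ => hB e.1 e.2
  have hsing : ∀ (K : SimpleGraph V) v, ((({v} ×ˢ univ : Finset (V × V)).filter
      fun e => K.Adj e.1 e.2).card : ℝ) = ((univ.filter fun w => K.Adj v w).card : ℝ) := by
    intro K v
    congr 1
    refine card_bij' (fun e _ => e.2) (fun w _ => (v, w)) ?_ ?_ ?_ ?_ <;> simp
    all_goals aesop
  have hεα : ε / α ≤ 1 := by rw [div_le_one hαpos]; linarith
  have hεα' : ε / α * α = ε := div_mul_cancel₀ _ hαpos.ne'
  refine ⟨B, Hs, ?_, ?_, ?_, ?_, ?_⟩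
  · rw [hHs]; exact Set.inter_subset_left
  · rw [hBe]; exact Set.sdiff_subset
  · rw [hBe, hHs, Set.disjoint_left]
    intro e he he'
    exact he.2 he'.2
  · intro v
    have h := hF (Sum.inl v)
    dsimp only at h
    have h2 := hcount ({v} ×ˢ univ)
    rw [hsing] at h2 h
    rw [hsing] at h2
    have h3 := hQa v
    rw [abs_le] at h
    generalize ((univ.filter fun w => G.Adj v w).card : ℝ) = d at *
    have hd : 0 ≤ d := by
      refine le_trans ?_ h3
      exact mul_nonneg (by linarith) hnR.le
    have h4 : d / M ≤ d * (ε / α) := by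
      rw [div_eq_mul_one_div]; exact mul_le_mul_of_nonneg_left hMinv1 hd
    have h5 : (α - ε) * n * (1 - ε / α) ≤ d * (1 - ε / α) :=
      mul_le_mul_of_nonneg_right h3 (by linarith)
    have h6 : (α - ε) * n * (1 - ε / α) = (α - 2 * ε) * n + ε * n * (ε / α) := by
      linear_combination (-n : ℝ) * hεα'
    have h7 : 0 ≤ ε * n * (ε / α) := by positivity
    nlinarith
  · intro S T hST hS hT
    have h := hF (Sum.inr ⟨(S, T), hST, hS, hT⟩)
    dsimp only at h
    have h2 := hcount (S ×ˢ T)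
    have h3 := hQb S T hST hS hT
    have hs := hεn.trans_le hS
    have ht := hεn.trans_le hT
    have hst : 0 < (S.card : ℝ) * T.card := by positivity
    have hHc : (((S ×ˢ T).filter fun e => s(e.1, e.2) ∈ Hs).card : ℝ) =
        ((((S ×ˢ T).filter fun e => G.Adj e.1 e.2).filter fun e => s(e.1, e.2) ∈ F).card : ℝ) := by
      congr 1
      rw [filter_filter]
      congr 1
      refine filter_congr fun e _ => ?_
      rw [hHs]; simp
    rw [hHc]
    rw [abs_le] at h h3
    generalize ((((S ×ˢ T).filter fun e => G.Adj e.1 e.2).filter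
      fun e => s(e.1, e.2) ∈ F).card : ℝ) = hh at *
    generalize (((S ×ˢ T).filter fun e => G.Adj e.1 e.2).card : ℝ) = d at *
    generalize (S.card : ℝ) * T.card = st at *
    have h3' : (α - ε) * st ≤ d := by
      have : α - ε ≤ d / st := by linarith [h3.1]
      rwa [le_div_iff₀ hst] at this
    have hd : 0 ≤ d := by
      refine le_trans ?_ h3'
      exact mul_nonneg (by linarith) hst.le
    have h4 : d / M ≤ d * (ε / α) := by
      rw [div_eq_mul_one_div]; exact mul_le_mul_of_nonneg_left hMinv1 hd
    have h5 : (α - ε) * st * (1 - ε / α) ≤ d * (1 - ε / α) :=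
      mul_le_mul_of_nonneg_right h3' (by linarith)
    have h6 : (α - ε) * st * (1 - ε / α) = (α - 2 * ε) * st + ε * st * (ε / α) := by
      linear_combination (-st : ℝ) * hεα'
    have h7 : 0 ≤ ε * st * (ε / α) := by positivity
    have h8 : 0 < ε * st := by positivity
    constructor
    · nlinarith
    · have h9 : d * (0.99 * ε / α) ≤ d / M := by
        rw [div_eq_mul_one_div d]; exact mul_le_mul_of_nonneg_left hMinv2 hd
      have h10 : (α - ε) * st * (0.99 * ε / α) ≤ d * (0.99 * ε / α) :=
        mul_le_mul_of_nonneg_right h3' (by positivity)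
      have h11 : (α - ε) * st * (0.99 * ε / α) = 0.99 * (ε * st) * (1 - ε / α) := by
        field_simp
      have h12 : ε / α ≤ 0.01 := by rw [div_le_iff₀ hαpos]; linarith
      have h13 : 0.99 * (ε * st) * 0.99 ≤ 0.99 * (ε * st) * (1 - ε / α) :=
        mul_le_mul_of_nonneg_left (by linarith) (by positivity)
      linarith [h.1]

/-- random signs -/
noncomputable def sg {V : Type*} (f : V → Bool) (x : V) : ℝ := if f x then 1 / 2 else -1 / 2

open scoped Classical in
theorem sum_sg {V : Type*} [Fintype V] (x : V) : ∑ f : V → Bool, sg f x = 0 := by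
  have hinv : Function.Involutive (fun f : V → Bool => Function.update f x (!f x)) := by
    intro f; simp
  have h := Equiv.sum_comp (hinv.toPerm _) (fun f : V → Bool => sg f x)
  have h2 : ∀ f : V → Bool, sg (hinv.toPerm _ f) x = - sg f x := by
    intro f
    simp only [Function.Involutive.coe_toPerm, sg, Function.update_self]
    cases f x <;> norm_num
  simp only [h2, sum_neg_distrib] at h
  linarith

open scoped Classical in
theorem sum_sg_mul {V : Type*} [Fintype V] (x y : V) (hxy : x ≠ y) :
    ∑ f : V → Bool, sg f x * sg f y = 0 := by
  have hinv : Function.Involutive (fun f : V → Bool => Function.update f x (!f x)) := by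
    intro f; simp
  have h := Equiv.sum_comp (hinv.toPerm _) (fun f : V → Bool => sg f x * sg f y)
  have h2 : ∀ f : V → Bool, sg (hinv.toPerm _ f) x = - sg f x := by
    intro f
    simp only [Function.Involutive.coe_toPerm, sg, Function.update_self]
    cases f x <;> norm_num
  have h3 : ∀ f : V → Bool, sg (hinv.toPerm _ f) y = sg f y := by
    intro f
    simp only [Function.Involutive.coe_toPerm, sg, Function.update_of_ne hxy.symm]
  simp only [h2, h3, neg_mul, sum_neg_distrib] at h
  linarith

theorem sg_sq {V : Type*} (f : V → Bool) (x : V) : sg f x * sg f x = 1 / 4 := by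
  unfold sg; split_ifs <;> norm_num

open scoped Classical in
theorem sum_sg_sq {V : Type*} [Fintype V] (S : Finset V) :
    ∑ f : V → Bool, (∑ x ∈ S, sg f x) ^ 2 = S.card * (Fintype.card (V → Bool) : ℝ) / 4 := by
  simp_rw [sq, Finset.sum_mul_sum]
  rw [sum_comm]
  simp_rw [sum_comm (s := (univ : Finset (V → Bool)))]
  have : ∀ x ∈ S, ∑ y ∈ S, ∑ f : V → Bool, sg f x * sg f y =
      (Fintype.card (V → Bool) : ℝ) / 4 := by
    intro x hx
    rw [sum_eq_single_of_mem x hx]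
    · simp_rw [sg_sq]; simp; ring
    · intro y _ hy; exact sum_sg_mul x y hy.symm
  rw [sum_congr rfl this]; simp; ring

open scoped Classical in
theorem sum_pair {V : Type*} [Fintype V] (R : Finset (V × V)) (hR : ∀ e ∈ R, e.1 ≠ e.2) :
    ∑ f : V → Bool, ((R.filter fun e => f e.1 = true ∧ f e.2 = false).card : ℝ) =
      R.card * (Fintype.card (V → Bool) : ℝ) / 4 := by
  have h1 : ∀ f : V → Bool, ((R.filter fun e => f e.1 = true ∧ f e.2 = false).card : ℝ) =
      ∑ e ∈ R, (1 / 2 + sg f e.1) * (1 / 2 - sg f e.2) := by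
    intro f
    rw [← Finset.sum_boole]
    refine sum_congr rfl fun e _ => ?_
    unfold sg
    cases f e.1 <;> cases f e.2 <;> norm_num
  simp_rw [h1]
  rw [sum_comm]
  have : ∀ e ∈ R, ∑ f : V → Bool, (1 / 2 + sg f e.1) * (1 / 2 - sg f e.2) =
      (Fintype.card (V → Bool) : ℝ) / 4 := by
    intro e he
    have : ∀ f : V → Bool, (1 / 2 + sg f e.1) * (1 / 2 - sg f e.2) =
      1 / 4 + (1 / 2) * sg f e.1 - (1 / 2) * sg f e.2 - sg f e.1 * sg f e.2 := by intro f; ring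
    simp_rw [this, sum_sub_distrib, sum_add_distrib, ← mul_sum]
    rw [sum_sg, sum_sg, sum_sg_mul _ _ (hR e he)]
    simp; ring
  rw [sum_congr rfl this]; simp; ring

open scoped Classical in
theorem overlap {V : Type*} [Fintype V] (B : V → V → Prop) (hirr : ∀ x, ¬ B x x) (β δ : ℝ)
    (hβ : 0 ≤ β) (hδ : 0 < δ)
    (h : ∀ S T : Finset V, Disjoint S T → δ ≤ S.card → δ ≤ T.card →
      β * ((S.card : ℝ) * T.card) ≤ (((S ×ˢ T).filter fun e => B e.1 e.2).card : ℝ))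
    (S T : Finset V) (hS : 4 * δ ≤ S.card) (hT : 4 * δ ≤ T.card) :
    β * ((S.card : ℝ) * T.card - 5 * (S.card + T.card)) ≤
      (((S ×ˢ T).filter fun e => B e.1 e.2).card : ℝ) := by
  have hs : (0 : ℝ) < S.card := by linarith
  have ht : (0 : ℝ) < T.card := by linarith
  set N : ℝ := (Fintype.card (V → Bool) : ℝ) with hN
  have hNpos : 0 < N := by rw [hN]; exact_mod_cast Fintype.card_pos
  have hS0 : ∀ f : V → Bool, ((S.filter fun x => f x = true).card : ℝ) =
      S.card / 2 + ∑ x ∈ S, sg f x := by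
    intro f
    rw [← Finset.sum_boole]
    have : (S.card : ℝ) / 2 = ∑ x ∈ S, (1 / 2 : ℝ) := by simp; ring
    rw [this, ← sum_add_distrib]
    refine sum_congr rfl fun x _ => ?_
    unfold sg; split_ifs <;> norm_num
  have hT0 : ∀ f : V → Bool, ((T.filter fun x => f x = false).card : ℝ) =
      T.card / 2 - ∑ x ∈ T, sg f x := by
    intro f
    rw [← Finset.sum_boole]
    have : (T.card : ℝ) / 2 = ∑ x ∈ T, (1 / 2 : ℝ) := by simp; ring
    rw [this, ← sum_sub_distrib]
    refine sum_congr rfl fun x _ => ?_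
    unfold sg; cases f x <;> norm_num
  have key : ∀ f : V → Bool,
      β * ((((S ×ˢ T).filter fun e => e.1 ≠ e.2).filter
        fun e => f e.1 = true ∧ f e.2 = false).card : ℝ)
        - β * (4 * T.card / S.card * (∑ x ∈ S, sg f x) ^ 2 +
          4 * S.card / T.card * (∑ x ∈ T, sg f x) ^ 2) ≤
      ((((S ×ˢ T).filter fun e => B e.1 e.2).filter
        fun e => f e.1 = true ∧ f e.2 = false).card : ℝ) := by
    intro f
    set S0 := S.filter fun x => f x = true with hS0d
    set T0 := T.filter fun x => f x = false with hT0d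
    have hdis : Disjoint S0 T0 := by
      rw [disjoint_left]; intro x hx hy
      simp only [hS0d, hT0d, mem_filter] at hx hy
      rw [hx.2] at hy; simp at hy
    have e1 : (((S ×ˢ T).filter fun e => e.1 ≠ e.2).filter
        fun e => f e.1 = true ∧ f e.2 = false) = S0 ×ˢ T0 := by
      ext ⟨x, y⟩
      simp only [mem_filter, mem_product, hS0d, hT0d]
      constructor
      · tauto
      · rintro ⟨⟨h1, h2⟩, h3, h4⟩
        exact ⟨⟨⟨h1, h3⟩, fun h => by subst h; rw [h2] at h4; simp at h4⟩, h2, h4⟩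
    have e2 : (((S ×ˢ T).filter fun e => B e.1 e.2).filter
        fun e => f e.1 = true ∧ f e.2 = false) = (S0 ×ˢ T0).filter fun e => B e.1 e.2 := by
      ext ⟨x, y⟩
      simp only [mem_filter, mem_product, hS0d, hT0d]
      tauto
    rw [e1, e2, card_product, Nat.cast_mul]
    have hS0' := hS0 f
    have hT0' := hT0 f
    rw [← hS0d] at hS0'
    rw [← hT0d] at hT0'
    have s0 : (0 : ℝ) ≤ S0.card := by positivity
    have t0 : (0 : ℝ) ≤ T0.card := by positivity
    have s1 : (S0.card : ℝ) ≤ S.card := by exact_mod_cast card_filter_le _ _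
    have t1 : (T0.card : ℝ) ≤ T.card := by exact_mod_cast card_filter_le _ _
    have p1 : 0 ≤ 4 * T.card / S.card * (∑ x ∈ S, sg f x) ^ 2 := by positivity
    have p2 : 0 ≤ 4 * S.card / T.card * (∑ x ∈ T, sg f x) ^ 2 := by positivity
    have nn : (0 : ℝ) ≤ (((S0 ×ˢ T0).filter fun e => B e.1 e.2).card : ℝ) := by positivity
    by_cases c1 : δ ≤ S0.card
    · by_cases c2 : δ ≤ T0.card
      · have := h S0 T0 hdis c1 c2
        nlinarith [mul_nonneg hβ p1, mul_nonneg hβ p2]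
      · push Not at c2
        refine le_trans ?_ nn
        have q : (S0.card : ℝ) * T0.card ≤ 4 * S.card / T.card * (∑ x ∈ T, sg f x) ^ 2 := by
          have : (T.card : ℝ) / 4 ≤ ∑ x ∈ T, sg f x := by linarith
          have h3 : ((T.card : ℝ) / 4) ^ 2 ≤ (∑ x ∈ T, sg f x) ^ 2 :=
            pow_le_pow_left₀ (by positivity) this 2
          have h4 : 4 * S.card / T.card * ((T.card : ℝ) / 4) ^ 2 ≤
            4 * S.card / T.card * (∑ x ∈ T, sg f x) ^ 2 :=
            mul_le_mul_of_nonneg_left h3 (by positivity)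
          have h5 : 4 * (S.card : ℝ) / T.card * ((T.card : ℝ) / 4) ^ 2 = S.card * (T.card / 4) := by
            field_simp
          have h6 : (S0.card : ℝ) * T0.card ≤ S.card * (T.card / 4) :=
            mul_le_mul s1 (by linarith) t0 hs.le
          linarith
        have := mul_le_mul_of_nonneg_left q hβ
        nlinarith [mul_nonneg hβ p1]
    · push Not at c1
      refine le_trans ?_ nn
      have q : (S0.card : ℝ) * T0.card ≤ 4 * T.card / S.card * (∑ x ∈ S, sg f x) ^ 2 := by
        have : (S.card : ℝ) / 4 ≤ -∑ x ∈ S, sg f x := by linarith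
        have h3 : ((S.card : ℝ) / 4) ^ 2 ≤ (-∑ x ∈ S, sg f x) ^ 2 :=
          pow_le_pow_left₀ (by positivity) this 2
        rw [neg_sq] at h3
        have h4 : 4 * T.card / S.card * ((S.card : ℝ) / 4) ^ 2 ≤
          4 * T.card / S.card * (∑ x ∈ S, sg f x) ^ 2 :=
          mul_le_mul_of_nonneg_left h3 (by positivity)
        have h5 : 4 * (T.card : ℝ) / S.card * ((S.card : ℝ) / 4) ^ 2 = (S.card / 4) * T.card := by
          field_simp
        have h6 : (S0.card : ℝ) * T0.card ≤ (S.card / 4) * T.card :=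
          mul_le_mul (by linarith) t1 t0 (by positivity)
        linarith
      have := mul_le_mul_of_nonneg_left q hβ
      nlinarith [mul_nonneg hβ p2]
  have hsum := sum_le_sum fun f (_ : f ∈ (univ : Finset (V → Bool))) => key f
  rw [sum_sub_distrib, ← mul_sum, ← mul_sum, sum_add_distrib, ← mul_sum, ← mul_sum,
    sum_sg_sq, sum_sg_sq, sum_pair _ (by intro e he; exact (mem_filter.1 he).2),
    sum_pair _ (by
      intro e he h; have := (mem_filter.1 he).2; rw [h] at this; exact hirr _ this), ← hN] at hsum
  have hdiag : (S.card : ℝ) * T.card - S.card ≤ (((S ×ˢ T).filter fun e => e.1 ≠ e.2).card : ℝ) := by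
    have h1 := card_filter_add_card_filter_not (s := S ×ˢ T) (fun e => e.1 ≠ e.2)
    have h2 : ((S ×ˢ T).filter fun e => ¬ (e.1 ≠ e.2)).card ≤ S.card := by
      refine card_le_card_of_injOn (fun e => e.1) ?_ ?_
      · intro e he; simp at he ⊢; exact he.1.1
      · rintro ⟨x, y⟩ he ⟨x', y'⟩ he' hh
        simp at he he' hh
        rw [← he.2, ← he'.2, hh]
    rw [card_product] at h1
    have h3 : (((S ×ˢ T).filter fun e => e.1 ≠ e.2).card : ℝ) +
      ((S ×ˢ T).filter fun e => ¬ (e.1 ≠ e.2)).card = S.card * T.card := by exact_mod_cast h1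
    have h4 : (((S ×ˢ T).filter fun e => ¬ (e.1 ≠ e.2)).card : ℝ) ≤ S.card := by exact_mod_cast h2
    linarith
  have e1 : 4 * (T.card : ℝ) / S.card * (S.card * N / 4) = T.card * N := by field_simp
  have e2 : 4 * (S.card : ℝ) / T.card * (T.card * N / 4) = S.card * N := by field_simp
  rw [e1, e2] at hsum
  have h3 := mul_le_mul_of_nonneg_left hdiag hβ
  generalize (((S ×ˢ T).filter fun e => e.1 ≠ e.2).card : ℝ) = d at *
  generalize (((S ×ˢ T).filter fun e => B e.1 e.2).card : ℝ) = b at *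
  have h4 : (β * d - 4 * β * (T.card + S.card)) * N ≤ b * N := by linarith
  have h5 := le_of_mul_le_mul_right h4 hNpos
  nlinarith [mul_nonneg hβ hs.le, mul_nonneg hβ ht.le]

open scoped Classical in
theorem deg_lower {X Y : Type*} [Fintype Y] (Q : X → Y → Prop) (d : ℝ) (S : Finset X)
    (h : ∀ x ∈ S, d ≤ ((univ.filter fun y => Q x y).card : ℝ)) (T : Finset Y) :
    S.card * (d - (Fintype.card Y - T.card)) ≤
      (((S ×ˢ T).filter fun e => Q e.1 e.2).card : ℝ) := by
  rw [card_filter_prod_eq_sum, Nat.cast_sum, ← nsmul_eq_mul]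
  refine Finset.card_nsmul_le_sum _ _ _ fun x hx => ?_
  have h1 : (univ.filter fun y => Q x y) ⊆ (T.filter fun y => Q x y) ∪ Tᶜ := by
    intro y hy
    simp only [mem_filter, mem_univ, true_and, mem_union, mem_compl] at hy ⊢
    tauto
  have h2 := (card_le_card h1).trans (card_union_le _ _)
  have h3 : (((univ.filter fun y => Q x y).card : ℕ) : ℝ) ≤
      ((T.filter fun y => Q x y).card : ℝ) + (Tᶜ.card : ℝ) := by exact_mod_cast h2
  have h4 : (T.card : ℝ) + (Tᶜ.card : ℝ) = Fintype.card Y := by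
    exact_mod_cast card_add_card_compl T
  linarith [h x hx]

open scoped Classical in
theorem filter_prod_swap {X Y : Type*} (Q : X → Y → Prop) (S : Finset X) (T : Finset Y) :
    ((S ×ˢ T).filter fun e => Q e.1 e.2).card = ((T ×ˢ S).filter fun e => Q e.2 e.1).card := by
  rw [card_filter_prod_eq_sum, card_filter_prod_eq_sum' T S (fun y x => Q x y)]

open scoped Classical in
theorem exists_R {V : Type*} [Fintype V] (n : ℕ) (hV : Fintype.card V = n) (B : SimpleGraph V)
    (β ε : ℝ) (hε : 0 < ε) (hβ : 4 * ε ≤ β) (hbig : 5 ≤ ε * β * n)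
    (hdeg : ∀ v, β * (n : ℝ) ≤ ((univ.filter fun w => B.Adj v w).card : ℝ))
    (hov : ∀ S T : Finset V, 4 * (ε * n) ≤ S.card → 4 * (ε * n) ≤ T.card →
      β * ((S.card : ℝ) * T.card - 5 * (S.card + T.card)) ≤
      (((S ×ˢ T).filter fun e => B.Adj e.1 e.2).card : ℝ))
    (r : ℕ) (hr : (r : ℝ) ≤ (β - 2 * ε) * n) :
    ∃ R : V → V → Prop, (∀ x y, R x y → B.Adj x y) ∧
      (∀ x, (univ.filter fun y => R x y).card = r) ∧
      (∀ y, (univ.filter fun x => R x y).card = r) := by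
  refine exists_factor n r hV hV _ fun S T => ?_
  have hnR : (0 : ℝ) ≤ n := by positivity
  have hr0 : (0 : ℝ) ≤ r := by positivity
  have hsn : (S.card : ℝ) ≤ n := by rw [← hV]; exact_mod_cast card_le_univ S
  have htn : (T.card : ℝ) ≤ n := by rw [← hV]; exact_mod_cast card_le_univ T
  suffices h : (r : ℝ) * (S.card + T.card - n) ≤
      (((S ×ˢ T).filter fun e => B.Adj e.1 e.2).card : ℝ) by
    have : (r : ℝ) * (S.card + T.card) ≤
      (((S ×ˢ T).filter fun e => B.Adj e.1 e.2).card : ℝ) + r * n := by linarith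
    exact_mod_cast this
  have hrβ : (r : ℝ) ≤ β * n := by nlinarith
  by_cases h0 : (S.card : ℝ) + T.card ≤ n
  · refine le_trans (mul_nonpos_of_nonneg_of_nonpos hr0 (by linarith)) (by positivity)
  push Not at h0
  have gen : ∀ (s t e : ℝ), s ≤ β * n → t ≤ n → n < s + t → s * (β * n - (n - t)) ≤ e →
      r * (s + t - n) ≤ e := by
    intro s t e h1 h2 h3 h4
    have h5 : r * (s + t - n) ≤ β * n * (s + t - n) :=
      mul_le_mul_of_nonneg_right hrβ (by linarith)
    nlinarith [mul_nonneg (sub_nonneg.2 h1) (sub_nonneg.2 h2)]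
  by_cases h1 : (S.card : ℝ) ≤ β * n
  · refine gen _ _ _ h1 htn h0 ?_
    have := deg_lower B.Adj (β * n) S (fun x _ => hdeg x) T
    rwa [hV] at this
  by_cases h2 : (T.card : ℝ) ≤ β * n
  · rw [add_comm (S.card : ℝ)]
    refine gen _ _ _ h2 hsn (by linarith) ?_
    have := deg_lower B.Adj (β * n) T (fun x _ => hdeg x) S
    rw [hV] at this
    rw [filter_prod_swap]
    simp only [B.adj_comm] at this ⊢
    convert this using 4
  push Not at h1 h2
  have hβn : 4 * (ε * n) ≤ β * n := by nlinarith
  refine le_trans ?_ (hov S T (by linarith) (by linarith))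
  generalize (S.card : ℝ) = s at *
  generalize (T.card : ℝ) = t at *
  have hw : n * (s + t - n) ≤ s * t := by nlinarith [mul_nonneg (sub_nonneg.2 hsn) (sub_nonneg.2 htn)]
  have hβ2 : 0 ≤ β - 2 * ε := by linarith
  have h3 : r * (s + t - n) ≤ (β - 2 * ε) * (s * t) := by
    have := mul_le_mul_of_nonneg_right hr (show 0 ≤ s + t - n by linarith)
    have := mul_le_mul_of_nonneg_left hw hβ2
    linarith
  have h4 : β * n * (β * n) ≤ s * t := by
    have : 0 ≤ β * n := mul_nonneg (by linarith) hnR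
    exact mul_le_mul h1.le h2.le this (this.trans h1.le)
  have h5 : 5 * (β * n) ≤ ε * (s * t) := by
    have e1 : ε * (β * n * (β * n)) ≤ ε * (s * t) := mul_le_mul_of_nonneg_left h4 hε.le
    have e2 := mul_le_mul_of_nonneg_right hbig (show 0 ≤ β * n from mul_nonneg (by linarith) hnR)
    nlinarith
  have h6 : β * (s + t) ≤ β * (2 * n) := mul_le_mul_of_nonneg_left (by linarith) (by linarith)
  nlinarith

open scoped Classical in
theorem partition {V J : Type*} [Fintype V] [Fintype J] (k m ρ : ℕ) [NeZero k]
    (hV : Fintype.card V = k * m + ρ) (hm : 0 < m) (Y : J → Finset V) (lam : ℝ)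
    (hl0 : 0 ≤ lam) (hlm : lam ≤ m)
    (hsum : 2 * (Fintype.card J * k) * Real.exp (-lam ^ 2 / (4 * m)) < 1) :
    ∃ ψ : ZMod k → Fin m → V, (∀ i i' x x', ψ i x = ψ i' x' → i = i' ∧ x = x') ∧
      ∀ i j, |((univ.filter fun x => ψ i x ∈ Y j).card : ℝ) - (Y j).card / k| ≤ lam + ρ / k := by
  have hk : (0 : ℝ) < k := by exact_mod_cast Nat.pos_of_ne_zero (NeZero.ne k)
  have hemb : Nonempty (Fin m × ZMod k ↪ V) := by
    rw [Function.Embedding.nonempty_iff_card_le, Fintype.card_prod, Fintype.card_fin, ZMod.card, hV]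
    rw [mul_comm]; omega
  obtain ⟨φ⟩ := hemb
  obtain ⟨f, hf⟩ := exists_good (ι := Fin m) (κ := ZMod k) (J := J × ZMod k)
    (fun q x c => if φ (x, q.2 + c) ∈ Y q.1 then (1 : ℝ) else 0)
    (by intro q x c; split_ifs <;> norm_num) (by intro q x c; split_ifs <;> norm_num)
    (fun _ => univ) (by intro q x hx; simp at hx) (fun _ => (m : ℝ)) (fun _ => lam)
    (by intro _; exact_mod_cast hm) (by simp) (by intro _; exact hl0) (by intro _; exact hlm)
    (by
      rw [sum_const, card_univ, Fintype.card_prod, ZMod.card, nsmul_eq_mul]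
      push_cast
      linarith)
  refine ⟨fun i x => φ (x, i + f x), ?_, ?_⟩
  · intro i i' x x' h
    have := φ.injective h
    simp only [Prod.mk.injEq] at this
    obtain ⟨rfl, h2⟩ := this
    exact ⟨add_right_cancel h2, rfl⟩
  · intro i j
    have h := hf (j, i)
    dsimp only at h
    rw [Finset.sum_boole] at h
    have e1 : ∑ x : Fin m, (∑ c : ZMod k, (if φ (x, i + c) ∈ Y j then (1 : ℝ) else 0)) /
        (Fintype.card (ZMod k)) = ((univ.filter fun q => φ q ∈ Y j).card : ℝ) / k := by
      rw [← sum_div, ZMod.card]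
      congr 1
      rw [← Finset.sum_boole, Fintype.sum_prod_type]
      refine sum_congr rfl fun x _ => ?_
      exact Equiv.sum_comp (Equiv.addLeft i) (fun c => if φ (x, c) ∈ Y j then (1 : ℝ) else 0)
    rw [e1] at h
    have h2 : ((univ.filter fun q => φ q ∈ Y j).card : ℝ) ≤ (Y j).card := by
      have : (univ.filter fun q => φ q ∈ Y j).card ≤ (Y j).card := by
        refine card_le_card_of_injOn φ ?_ φ.injective.injOn
        intro q hq; simpa using hq
      exact_mod_cast this
    have h3 : ((Y j).card : ℝ) ≤ ((univ.filter fun q => φ q ∈ Y j).card : ℝ) + ρ := by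
      have hsub : Y j ⊆ (univ.filter fun q => φ q ∈ Y j).image φ ∪ (univ.image φ)ᶜ := by
        intro y hy
        by_cases hq : y ∈ univ.image φ
        · obtain ⟨q, -, rfl⟩ := mem_image.1 hq
          exact mem_union_left _ (mem_image_of_mem _ (by simp [hy]))
        · exact mem_union_right _ (mem_compl.2 hq)
      have h4 := (card_le_card hsub).trans (card_union_le _ _)
      rw [card_compl, card_image_of_injective _ φ.injective,
        card_image_of_injective _ φ.injective, card_univ, Fintype.card_prod, Fintype.card_fin,
        ZMod.card, hV] at h4
      have : k * m + ρ - m * k = ρ := by rw [mul_comm]; omega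
      rw [this] at h4
      exact_mod_cast h4
    have h5 := div_le_div_of_nonneg_right h2 hk.le
    have h6 := div_le_div_of_nonneg_right h3 hk.le
    rw [add_div] at h6
    have h7 : 0 ≤ (ρ : ℝ) / k := by positivity
    rw [abs_le] at h ⊢
    constructor <;> linarith [h.1, h.2]

open scoped Classical in
/-- common non-neighbourhood -/
noncomputable def cnn {V : Type*} [Fintype V] (B : V → V → Prop) {q : ℕ} (X : Fin q → Option V) :
    Finset V := univ.filter fun y => ∀ i x, X i = some x → ¬ B x y

open scoped Classical in
theorem expansion {V : Type*} [Fintype V] (B : V → V → Prop) (n m q : ℕ)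
    (hV : Fintype.card V = n) (hm : 0 < m)
    (φ χ : Fin m → V) (α : ℝ) (hα0 : 0 < α) (hα1 : α < 1) (hq : 6 / α ≤ q) (hq' : q ≤ 7 / α)
    (hbad : ∀ X : Fin q → Option V, (n : ℝ) / 8 < (cnn B X).card →
      ((univ.filter fun x => (((cnn B X).filter fun y => B (φ x) y).card : ℝ) <
        α / 2 * (cnn B X).card).card : ℝ) ≤ α * m / 9)
    (hU : ∀ X : Fin q → Option V, ((cnn B X).card : ℝ) ≤ n / 8 →
      ((univ.filter fun y => χ y ∈ cnn B X).card : ℝ) ≤ m / 4)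
    (S T : Finset (Fin m)) (hS : α * m / 4 ≤ S.card) (hT : (m : ℝ) / 2 ≤ T.card) :
    α / 256 * S.card * m ≤ (((S ×ˢ T).filter fun e => B (φ e.1) (χ e.2)).card : ℝ) := by
  by_contra hcon
  push Not at hcon
  have hmR : (0 : ℝ) < m := by exact_mod_cast hm
  set S' := S.filter fun x => ((T.filter fun y => B (φ x) (χ y)).card : ℝ) ≤ α / 128 * m with hS'
  have hS'c : (S.card : ℝ) / 2 ≤ S'.card := by
    by_contra hc
    push Not at hc
    rw [card_filter_prod_eq_sum S T (fun x y => B (φ x) (χ y)), Nat.cast_sum] at hcon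
    have h1 : ∑ x ∈ S.filter (fun x => ¬ ((T.filter fun y => B (φ x) (χ y)).card : ℝ) ≤ α / 128 * m),
        ((T.filter fun y => B (φ x) (χ y)).card : ℝ) ≤
        ∑ x ∈ S, ((T.filter fun y => B (φ x) (χ y)).card : ℝ) :=
      sum_le_sum_of_subset_of_nonneg (filter_subset _ _) (by intros; positivity)
    have h2 := Finset.card_nsmul_le_sum
      (S.filter (fun x => ¬ ((T.filter fun y => B (φ x) (χ y)).card : ℝ) ≤ α / 128 * m))
      (fun x => ((T.filter fun y => B (φ x) (χ y)).card : ℝ)) (α / 128 * m) (by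
        intro x hx
        have := (mem_filter.1 hx).2
        push Not at this
        exact this.le)
    rw [nsmul_eq_mul] at h2
    have h3 := card_filter_add_card_filter_not (s := S)
      (fun x => ((T.filter fun y => B (φ x) (χ y)).card : ℝ) ≤ α / 128 * m)
    have h4 : (S'.card : ℝ) + ((S.filter (fun x => ¬ ((T.filter fun y => B (φ x) (χ y)).card : ℝ)
      ≤ α / 128 * m)).card : ℝ) = S.card := by exact_mod_cast h3
    have h5 : (S.card : ℝ) / 2 < ((S.filter (fun x => ¬ ((T.filter fun y => B (φ x) (χ y)).card : ℝ)
      ≤ α / 128 * m)).card : ℝ) := by linarith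
    have h6 : (S.card : ℝ) / 2 * (α / 128 * m) < ((S.filter (fun x => ¬ ((T.filter fun y =>
      B (φ x) (χ y)).card : ℝ) ≤ α / 128 * m)).card : ℝ) * (α / 128 * m) :=
      mul_lt_mul_of_pos_right h5 (by positivity)
    linarith
  have hαm : 0 < α * m := by positivity
  have greedy : ∀ t : ℕ, t ≤ q → ∃ X : Fin q → Option V,
      (∀ i v, X i = some v → ∃ x ∈ S', φ x = v) ∧ (∀ i : Fin q, t ≤ i → X i = none) ∧
      ((cnn B X).card : ℝ) ≤ max ((n : ℝ) / 8) (Real.exp (-(α / 2) * t) * n) := by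
    intro t
    induction t with
    | zero =>
      intro _
      refine ⟨fun _ => none, by simp, by simp, ?_⟩
      refine le_trans ?_ (le_max_right _ _)
      simp only [Nat.cast_zero, mul_zero, Real.exp_zero, one_mul]
      rw [← hV]; exact_mod_cast card_le_univ _
    | succ t ih =>
      intro ht
      obtain ⟨X, h1, h2, h3⟩ := ih (by omega)
      by_cases hb : ((cnn B X).card : ℝ) ≤ n / 8
      · exact ⟨X, h1, fun i hi => h2 i (by omega), hb.trans (le_max_left _ _)⟩
      push Not at hb
      have hbb := hbad X hb
      obtain ⟨x, hxS, hxB⟩ : ∃ x ∈ S', α / 2 * (cnn B X).card ≤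
          (((cnn B X).filter fun y => B (φ x) y).card : ℝ) := by
        by_contra hno
        push Not at hno
        have : S' ⊆ univ.filter fun x => (((cnn B X).filter fun y => B (φ x) y).card : ℝ) <
            α / 2 * (cnn B X).card := by
          intro x hx; simpa using hno x hx
        have h4 : (S'.card : ℝ) ≤ _ := Nat.cast_le.2 (card_le_card this)
        linarith
      refine ⟨Function.update X ⟨t, by omega⟩ (some (φ x)), ?_, ?_, ?_⟩
      · intro i v hi
        by_cases hit : i = ⟨t, by omega⟩
        · subst hit
          rw [Function.update_self] at hi
          exact ⟨x, hxS, by simpa using hi⟩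
        · rw [Function.update_of_ne hit] at hi
          exact h1 i v hi
      · intro i hi
        rw [Function.update_of_ne]
        · exact h2 i (by omega)
        · intro h; subst h; simp at hi
      · refine le_trans ?_ (le_max_right _ _)
        have hsub : cnn B (Function.update X ⟨t, by omega⟩ (some (φ x))) ⊆
            (cnn B X).filter fun y => ¬ B (φ x) y := by
          intro y hy
          simp only [cnn, mem_filter, mem_univ, true_and] at hy ⊢
          refine ⟨?_, hy ⟨t, by omega⟩ (φ x) (by simp)⟩
          intro i v hi
          refine hy i v ?_
          rw [Function.update_of_ne]
          · exact hi
          · intro h; subst h; rw [h2 _ (le_refl _)] at hi; simp at hi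
        have h4 : ((cnn B (Function.update X ⟨t, by omega⟩ (some (φ x)))).card : ℝ) ≤
            (((cnn B X).filter fun y => ¬ B (φ x) y).card : ℝ) := Nat.cast_le.2 (card_le_card hsub)
        have h5 := card_filter_add_card_filter_not (s := cnn B X) (fun y => B (φ x) y)
        have h6 : (((cnn B X).filter fun y => B (φ x) y).card : ℝ) +
          (((cnn B X).filter fun y => ¬ B (φ x) y).card : ℝ) = (cnn B X).card := by
          exact_mod_cast h5
        have h7 : ((cnn B X).card : ℝ) ≤ Real.exp (-(α / 2) * t) * n := by
          rcases le_max_iff.1 h3 with h | h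
          · linarith
          · exact h
        have h8 : Real.exp (-(α / 2) * (t + 1 : ℕ)) = Real.exp (-(α / 2) * t) * Real.exp (-(α / 2)) := by
          rw [← Real.exp_add]; congr 1; push_cast; ring
        have h9 := Real.add_one_le_exp (-(α / 2))
        rw [h8]
        have h10 : (1 - α / 2) * ((cnn B X).card : ℝ) ≤
            Real.exp (-(α / 2)) * (Real.exp (-(α / 2) * t) * n) :=
          mul_le_mul (by linarith) h7 (by positivity) (Real.exp_pos _).le
        linarith
  obtain ⟨X, h1, -, h3⟩ := greedy q le_rfl
  have hq8 : Real.exp (-(α / 2) * q) ≤ 1 / 8 := by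
    have e1 : -(α / 2) * q ≤ -3 := by
      rw [div_le_iff₀ hα0] at hq; linarith
    have e2 : Real.exp 3 = Real.exp 1 * Real.exp 1 * Real.exp 1 := by
      rw [← Real.exp_add, ← Real.exp_add]; norm_num
    have e3 : 8 ≤ Real.exp 3 := by
      have := Real.exp_one_gt_d9
      have h2 : 4 ≤ Real.exp 1 * Real.exp 1 := by nlinarith
      rw [e2]; nlinarith
    refine (Real.exp_le_exp.2 e1).trans ?_
    rw [Real.exp_neg, one_div]
    exact inv_anti₀ (by norm_num) e3
  have h4 : ((cnn B X).card : ℝ) ≤ n / 8 := by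
    refine h3.trans (max_le le_rfl ?_)
    have := mul_le_mul_of_nonneg_right hq8 (show (0 : ℝ) ≤ n by positivity)
    linarith
  have h5 := hU X h4
  have hsub : T ⊆ (univ.filter fun y => χ y ∈ cnn B X) ∪
      (univ : Finset (Fin q)).biUnion fun i => T.filter fun y => ∃ v, X i = some v ∧ B v (χ y) := by
    intro y hy
    by_cases hc : χ y ∈ cnn B X
    · exact mem_union_left _ (by simp [hc])
    · refine mem_union_right _ ?_
      simp only [cnn, mem_filter, mem_univ, true_and] at hc
      push Not at hc
      obtain ⟨i, v, hi, hv⟩ := hc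
      simp only [mem_biUnion, mem_univ, true_and, mem_filter]
      exact ⟨i, hy, v, hi, hv⟩
  have h6 := (card_le_card hsub).trans (card_union_le _ _)
  have h7 : (((univ : Finset (Fin q)).biUnion fun i => T.filter fun y =>
      ∃ v, X i = some v ∧ B v (χ y)).card : ℝ) ≤ q * (α / 128 * m) := by
    have h8 : (((univ : Finset (Fin q)).biUnion fun i => T.filter fun y =>
      ∃ v, X i = some v ∧ B v (χ y)).card : ℝ) ≤ ∑ i : Fin q, ((T.filter fun y =>
      ∃ v, X i = some v ∧ B v (χ y)).card : ℝ) := by exact_mod_cast card_biUnion_le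
    refine h8.trans ?_
    have h9 := Finset.sum_le_card_nsmul (univ : Finset (Fin q)) (fun i => ((T.filter fun y =>
      ∃ v, X i = some v ∧ B v (χ y)).card : ℝ)) (α / 128 * m) (by
        intro i _
        cases hXi : X i with
        | none => simp; positivity
        | some v =>
          obtain ⟨x, hx, rfl⟩ := h1 i v hXi
          have := (mem_filter.1 hx).2
          refine le_trans (le_of_eq ?_) this
          congr 2
          ext y; simp)
    simpa using h9
  have h10 : (T.card : ℝ) ≤ ((univ.filter fun y => χ y ∈ cnn B X).card : ℝ) +
    (((univ : Finset (Fin q)).biUnion fun i => T.filter fun y =>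
      ∃ v, X i = some v ∧ B v (χ y)).card : ℝ) := by exact_mod_cast h6
  have h11 : (q : ℝ) * (α / 128 * m) ≤ 7 / 128 * m := by
    rw [le_div_iff₀ hα0] at hq'
    nlinarith
  linarith

open scoped Classical in
theorem half_pair (m : ℕ) (Q R : Fin m → Fin m → Prop) (hRQ : ∀ x y, R x y → Q x y)
    (rk θ D α ε : ℝ) (hε : 0 < ε) (hm : 0 < m) (hθ : θ ≤ ε * m / 512) (hD0 : 0 ≤ D)
    (hD : D ≤ rk - 2 * ε * m) (hDα : D ≤ α * m) (hlow : 9 / 10 * α * m ≤ rk - θ) (hα0 : 0 < α)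
    (hrow : ∀ x, rk - θ ≤ ((univ.filter fun y => R x y).card : ℝ))
    (hcol : ∀ y, ((univ.filter fun x => R x y).card : ℝ) ≤ rk + θ)
    (hexp : ∀ S T : Finset (Fin m), α * m / 4 ≤ S.card → (m : ℝ) / 2 ≤ T.card →
      α / 256 * S.card * m ≤ (((S ×ˢ T).filter fun e => Q e.1 e.2).card : ℝ))
    (S T : Finset (Fin m)) (hT : (m : ℝ) / 2 ≤ T.card) :
    D * (S.card + T.card - m) ≤ (((S ×ˢ T).filter fun e => Q e.1 e.2).card : ℝ) := by
  have hmR : (0 : ℝ) < m := by exact_mod_cast hm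
  have hεm : 0 < ε * m := by positivity
  have htm : (T.card : ℝ) ≤ m := by
    have := card_le_univ T
    simp at this; exact_mod_cast this
  have hs0 : (0 : ℝ) ≤ S.card := by positivity
  have hRQc : (((S ×ˢ T).filter fun e => R e.1 e.2).card : ℝ) ≤
      (((S ×ˢ T).filter fun e => Q e.1 e.2).card : ℝ) := by
    exact_mod_cast card_le_card (monotone_filter_right _ (fun e _ h => hRQ _ _ h))
  have hQrow : ∀ x ∈ S, 9 / 10 * α * m ≤ ((univ.filter fun y => Q x y).card : ℝ) := by
    intro x _
    refine hlow.trans ((hrow x).trans ?_)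
    exact_mod_cast card_le_card (monotone_filter_right _ (fun e _ h => hRQ _ _ h))
  have hdl := deg_lower Q _ S hQrow T
  have heT : (((S ×ˢ Tᶜ).filter fun e => R e.1 e.2).card : ℝ) ≤ (m - T.card) * (rk + θ) := by
    rw [card_filter_prod_eq_sum', Nat.cast_sum]
    have h1 := Finset.sum_le_card_nsmul Tᶜ (fun y => ((S.filter fun x => R x y).card : ℝ)) (rk + θ)
      (by
        intro y _
        refine le_trans ?_ (hcol y)
        exact_mod_cast card_le_card (filter_subset_filter _ (subset_univ _)))
    rw [nsmul_eq_mul, card_compl, Nat.cast_sub (card_le_univ T)] at h1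
    simpa using h1
  have heA : S.card * (rk - θ) ≤ (((S ×ˢ T).filter fun e => R e.1 e.2).card : ℝ) +
      (((S ×ˢ Tᶜ).filter fun e => R e.1 e.2).card : ℝ) := by
    rw [card_filter_prod_eq_sum, card_filter_prod_eq_sum, ← Nat.cast_add, ← Finset.sum_add_distrib,
      Nat.cast_sum, ← nsmul_eq_mul]
    refine Finset.card_nsmul_le_sum _ _ _ fun x hx => (hrow x).trans ?_
    norm_cast
    rw [← card_union_of_disjoint, ← filter_union, union_compl]
    exact disjoint_filter_filter disjoint_compl_right
  have hexpST := hexp S T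
  have he0 : (0 : ℝ) ≤ (((S ×ˢ T).filter fun e => Q e.1 e.2).card : ℝ) := by positivity
  simp only [Fintype.card_fin] at hdl
  generalize (((S ×ˢ T).filter fun e => Q e.1 e.2).card : ℝ) = e at *
  generalize (((S ×ˢ T).filter fun e => R e.1 e.2).card : ℝ) = e1 at *
  generalize (((S ×ˢ Tᶜ).filter fun e => R e.1 e.2).card : ℝ) = e2 at *
  generalize (S.card : ℝ) = s at *
  generalize (T.card : ℝ) = t at *
  obtain ⟨u, hu⟩ : ∃ u, u = (m : ℝ) - t := ⟨_, rfl⟩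
  have hu0 : 0 ≤ u := by linarith
  rw [← hu] at heT hdl
  have hgoal : s + t - m = s - u := by linarith
  rw [hgoal]
  have hmain : s * (rk - θ) - u * (rk + θ) ≤ e := by linarith
  by_cases hsu : s ≤ u
  · exact (mul_nonpos_of_nonneg_of_nonpos hD0 (by linarith)).trans he0
  push Not at hsu
  by_cases hc : θ * (s + u) ≤ 2 * ε * m * (s - u)
  · have h1 : D * (s - u) ≤ (rk - 2 * ε * m) * (s - u) :=
      mul_le_mul_of_nonneg_right hD (by linarith)
    nlinarith
  push Not at hc
  have h1 : θ * (s + u) ≤ ε * m / 512 * (s + u) := mul_le_mul_of_nonneg_right hθ (by linarith)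
  have h2 : s - u ≤ s / 512 := by
    by_contra h
    push Not at h
    have := mul_lt_mul_of_pos_left h hεm
    nlinarith
  have h3 : D * (s - u) ≤ α * m * (s / 512) :=
    (mul_le_mul_of_nonneg_right hDα (by linarith)).trans
      (mul_le_mul_of_nonneg_left h2 (by positivity))
  by_cases hc2 : α * m / 4 ≤ s
  · have := hexpST hc2 hT
    have : 0 ≤ α * m * s := by positivity
    nlinarith
  · push Not at hc2
    have h4 : s * (9 / 10 * α * m - α * m / 4) ≤ s * (9 / 10 * α * m - u) :=
      mul_le_mul_of_nonneg_left (by linarith) hs0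
    have : 0 ≤ α * m * s := by positivity
    nlinarith

open scoped Classical in
theorem full_pair (m : ℕ) (Q R : Fin m → Fin m → Prop) (hRQ : ∀ x y, R x y → Q x y)
    (R' : Fin m → Fin m → Prop) (hRQ' : ∀ x y, R' x y → Q y x)
    (rk θ α ε : ℝ) (D : ℕ) (hε : 0 < ε) (hm : 0 < m) (hθ : θ ≤ ε * m / 512)
    (hD : (D : ℝ) ≤ rk - 2 * ε * m) (hDα : (D : ℝ) ≤ α * m) (hlow : 9 / 10 * α * m ≤ rk - θ)
    (hα0 : 0 < α)
    (hrow : ∀ x, rk - θ ≤ ((univ.filter fun y => R x y).card : ℝ))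
    (hcol : ∀ y, ((univ.filter fun x => R x y).card : ℝ) ≤ rk + θ)
    (hrow' : ∀ x, rk - θ ≤ ((univ.filter fun y => R' x y).card : ℝ))
    (hcol' : ∀ y, ((univ.filter fun x => R' x y).card : ℝ) ≤ rk + θ)
    (hexp : ∀ S T : Finset (Fin m), α * m / 4 ≤ S.card → (m : ℝ) / 2 ≤ T.card →
      α / 256 * S.card * m ≤ (((S ×ˢ T).filter fun e => Q e.1 e.2).card : ℝ))
    (hexp' : ∀ S T : Finset (Fin m), α * m / 4 ≤ S.card → (m : ℝ) / 2 ≤ T.card →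
      α / 256 * S.card * m ≤ (((S ×ˢ T).filter fun e => Q e.2 e.1).card : ℝ)) :
    ∃ π : Fin D → (Fin m ≃ Fin m), (∀ h x, Q x (π h x)) ∧ ∀ h h' x, π h x = π h' x → h = h' := by
  have hD0 : (0 : ℝ) ≤ D := by positivity
  obtain ⟨Q', hQ', hr, hc⟩ := exists_factor m D (by simp) (by simp) Q (by
    intro S T
    suffices h : (D : ℝ) * (S.card + T.card - m) ≤
        (((S ×ˢ T).filter fun e => Q e.1 e.2).card : ℝ) by
      have : (D : ℝ) * (S.card + T.card) ≤
        (((S ×ˢ T).filter fun e => Q e.1 e.2).card : ℝ) + D * m := by linarith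
      exact_mod_cast this
    by_cases hT : (m : ℝ) / 2 ≤ T.card
    · exact half_pair m Q R hRQ rk θ D α ε hε hm hθ hD0 hD hDα hlow hα0 hrow hcol hexp S T hT
    by_cases hS : (m : ℝ) / 2 ≤ S.card
    · have := half_pair m (fun x y => Q y x) R' hRQ' rk θ D α ε hε hm hθ hD0 hD hDα hlow hα0
        hrow' hcol' hexp' T S hS
      rw [filter_prod_swap, add_comm (S.card : ℝ)]
      exact this
    · push Not at hT hS
      exact (mul_nonpos_of_nonneg_of_nonpos hD0 (by linarith)).trans (by positivity))
  obtain ⟨π, h1, h2⟩ := exists_perms rfl D Q' hr hc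
  exact ⟨π, fun h x => hQ' _ _ (h1 h x), h2⟩

open scoped Classical in
theorem bad_small {V : Type*} [Fintype V] (n : ℕ) (B : SimpleGraph V)
    (α ε : ℝ) (hε : 0 < ε) (hα : 10 ^ 4 * ε ≤ α) (hα1 : α < 1) (hbig : 10 ≤ ε * n)
    (hov : ∀ S T : Finset V, 4 * (ε * n) ≤ S.card → 4 * (ε * n) ≤ T.card →
      (α - 3 * ε) * ((S.card : ℝ) * T.card - 5 * (S.card + T.card)) ≤
      (((S ×ˢ T).filter fun e => B.Adj e.1 e.2).card : ℝ))
    (W : Finset V) (hW : (n : ℝ) / 8 < W.card) :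
    ((univ.filter fun x => ((W.filter fun y => B.Adj x y).card : ℝ) < α / 2 * W.card).card : ℝ) ≤
      4 * (ε * n) := by
  by_contra hcon
  push Not at hcon
  obtain ⟨Z, hZ⟩ : ∃ Z : Finset V, Z = univ.filter fun x => ((W.filter fun y => B.Adj x y).card : ℝ) <
    α / 2 * W.card := ⟨_, rfl⟩
  rw [← hZ] at hcon
  have hn0 : (0 : ℝ) ≤ n := by positivity
  have hW4 : 4 * (ε * n) ≤ W.card := by nlinarith
  have h1 := hov Z W hcon.le hW4
  have h2 : (((Z ×ˢ W).filter fun e => B.Adj e.1 e.2).card : ℝ) ≤ Z.card * (α / 2 * W.card) := by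
    rw [card_filter_prod_eq_sum, Nat.cast_sum, ← nsmul_eq_mul]
    refine Finset.sum_le_card_nsmul _ _ _ fun x hx => ?_
    rw [hZ] at hx
    have := (mem_filter.1 hx).2.le
    exact this
  generalize (((Z ×ˢ W).filter fun e => B.Adj e.1 e.2).card : ℝ) = e at *
  generalize (Z.card : ℝ) = b at *
  generalize (W.card : ℝ) = w at *
  have hb : 40 ≤ b := by linarith
  have hw : 40 ≤ w := by linarith
  have h3 : 5 * (b + w) ≤ b * w / 4 := by nlinarith
  have h4 : (α - 3 * ε) * (b * w * (3 / 4)) ≤ (α - 3 * ε) * (b * w - 5 * (b + w)) :=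
    mul_le_mul_of_nonneg_left (by linarith) (by linarith)
  have h5 : 0 < b * w := by positivity
  have h6 : 0 < (b * w) * (3 / 4 * (α - 3 * ε) - α / 2) := mul_pos h5 (by linarith)
  nlinarith

open scoped Classical in
theorem exists_blocks {V : Type*} [Fintype V] (n k m ρ r D q : ℕ) [NeZero k]
    (hV : Fintype.card V = n) (hn : n = k * m + ρ) (B : SimpleGraph V)
    (α ε : ℝ) (hε : 0 < ε) (hα : 10 ^ 4 * ε ≤ α) (hα1 : α < 1)
    (hm : 10 ≤ ε * m) (hbig : 5 ≤ ε * (α - 3 * ε) * n)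
    (hρ : (ρ : ℝ) / k ≤ ε * m / 1024)
    (hr : (r : ℝ) ≤ (α - 5 * ε) * n) (hr' : (α - 5 * ε) * n - 1 ≤ r)
    (hD : (D : ℝ) ≤ (α - 8 * ε) * n / k + 1)
    (hq : 6 / α ≤ q) (hq' : q ≤ 7 / α)
    (hsum : 2 * (((n + n + ((n + 1) ^ q + (n + 1) ^ q) : ℕ) : ℝ) * k) *
      Real.exp (-(ε * m / 1024) ^ 2 / (4 * m)) < 1)
    (hdeg : ∀ v, (α - 3 * ε) * (n : ℝ) ≤ ((univ.filter fun w => B.Adj v w).card : ℝ))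
    (hB : ∀ S T : Finset V, Disjoint S T → ε * (n : ℝ) ≤ (S.card : ℝ) → ε * (n : ℝ) ≤ (T.card : ℝ) →
        (α - 3 * ε) * ((S.card : ℝ) * (T.card : ℝ)) ≤
          (((S ×ˢ T).filter fun e => B.Adj e.1 e.2).card : ℝ)) :
    ∃ (ψ : ZMod k → Fin m → V) (π : ZMod k → ZMod k → Fin D → (Fin m ≃ Fin m)),
      (∀ i i' x x', ψ i x = ψ i' x' → i = i' ∧ x = x') ∧
      (∀ i j h x, B.Adj (ψ i x) (ψ j (π i j h x))) ∧
      ∀ i j h h' x, π i j h x = π i j h' x → h = h' := by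
  have hk : (0 : ℝ) < k := by exact_mod_cast Nat.pos_of_ne_zero (NeZero.ne k)
  have hk1 : (1 : ℝ) ≤ k := by exact_mod_cast Nat.pos_of_ne_zero (NeZero.ne k)
  have hm0 : 0 < m := by
    rcases Nat.eq_zero_or_pos m with h | h
    · subst h; norm_num at hm
    · exact h
  have hmR : (0 : ℝ) < m := by exact_mod_cast hm0
  have hα0 : 0 < α := by linarith
  have hnR : (n : ℝ) = k * m + ρ := by rw [hn]; push_cast; ring
  obtain ⟨N, hN⟩ : ∃ N : ℝ, N = (n : ℝ) / k := ⟨_, rfl⟩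
  have hNm : N = m + ρ / k := by rw [hN, hnR]; field_simp
  have hρ0 : (0 : ℝ) ≤ ρ / k := by positivity
  have hnm : (m : ℝ) ≤ n := by
    have : (0 : ℝ) ≤ ρ := by positivity
    nlinarith
  have hεn : 10 ≤ ε * n := hm.trans (mul_le_mul_of_nonneg_left hnm hε.le)
  have hov := overlap B.Adj (fun x => B.irrefl) (α - 3 * ε) (ε * n) (by linarith) (by linarith) hB
  obtain ⟨R, hRB, hRr, hRc⟩ := exists_R n hV B (α - 3 * ε) ε hε (by linarith) hbig hdeg hov r
    (by rw [show α - 3 * ε - 2 * ε = α - 5 * ε by ring]; exact hr)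
  obtain ⟨Y, hY⟩ : ∃ Y : (V ⊕ V) ⊕ ((Fin q → Option V) ⊕ (Fin q → Option V)) → Finset V,
    Y = Sum.elim (Sum.elim (fun v => univ.filter fun y => R v y) (fun v => univ.filter fun x => R x v))
      (Sum.elim (fun X => if (n : ℝ) / 8 < (cnn B.Adj X).card then
        univ.filter fun x => (((cnn B.Adj X).filter fun y => B.Adj x y).card : ℝ) <
          α / 2 * (cnn B.Adj X).card else ∅)
        (fun X => if (n : ℝ) / 8 < (cnn B.Adj X).card then ∅ else cnn B.Adj X)) := ⟨_, rfl⟩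
  obtain ⟨ψ, hψ, hψY⟩ := partition k m ρ (hV.trans hn) hm0 Y (ε * m / 1024) (by positivity)
    (by nlinarith) (by
      have : Fintype.card ((V ⊕ V) ⊕ ((Fin q → Option V) ⊕ (Fin q → Option V))) =
        n + n + ((n + 1) ^ q + (n + 1) ^ q) := by
        simp [hV]
      rw [this]; exact hsum)
  have hθ : ε * m / 1024 + (ρ : ℝ) / k ≤ ε * m / 512 := by linarith
  have hRp : ∀ i v, |((univ.filter fun x => R v (ψ i x)).card : ℝ) - r / k| ≤ ε * m / 512 := by
    intro i v
    have := hψY i (Sum.inl (Sum.inl v))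
    rw [hY] at this
    simp only [Sum.elim_inl, mem_filter, mem_univ, true_and, hRr] at this
    exact this.trans hθ
  have hRm : ∀ i v, |((univ.filter fun x => R (ψ i x) v).card : ℝ) - r / k| ≤ ε * m / 512 := by
    intro i v
    have := hψY i (Sum.inl (Sum.inr v))
    rw [hY] at this
    simp only [Sum.elim_inl, Sum.elim_inr, mem_filter, mem_univ, true_and, hRc] at this
    exact this.trans hθ
  have hbad : ∀ i, ∀ X : Fin q → Option V, (n : ℝ) / 8 < (cnn B.Adj X).card →
      ((univ.filter fun x => (((cnn B.Adj X).filter fun y => B.Adj (ψ i x) y).card : ℝ) <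
        α / 2 * (cnn B.Adj X).card).card : ℝ) ≤ α * m / 9 := by
    intro i X hX
    have h1 := hψY i (Sum.inr (Sum.inl X))
    rw [hY] at h1
    simp only [Sum.elim_inl, Sum.elim_inr, if_pos hX, mem_filter, mem_univ, true_and] at h1
    have h2 := bad_small n B α ε hε hα hα1 hεn hov _ hX
    have h3 := div_le_div_of_nonneg_right h2 hk.le
    have h4 : 4 * (ε * n) / k = 4 * (ε * N) := by rw [hN]; ring
    rw [h4, hNm] at h3
    have h5 := (abs_le.1 h1).2
    have h6 : ε * (ρ / k) ≤ 1 * (ρ / k) := mul_le_mul_of_nonneg_right (by linarith) hρ0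
    have h7 : 10 ^ 4 * ε * m ≤ α * m := mul_le_mul_of_nonneg_right hα hmR.le
    linarith
  have hU : ∀ i, ∀ X : Fin q → Option V, ((cnn B.Adj X).card : ℝ) ≤ n / 8 →
      ((univ.filter fun y => ψ i y ∈ cnn B.Adj X).card : ℝ) ≤ m / 4 := by
    intro i X hX
    have h1 := hψY i (Sum.inr (Sum.inr X))
    rw [hY] at h1
    simp only [Sum.elim_inl, Sum.elim_inr, if_neg (not_lt.2 hX)] at h1
    have h3 := div_le_div_of_nonneg_right hX hk.le
    have h4 : (n : ℝ) / 8 / k = N / 8 := by rw [hN]; ring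
    rw [h4, hNm] at h3
    have h5 := (abs_le.1 h1).2
    have h6 : ε * m ≤ 1 * m := mul_le_mul_of_nonneg_right (by linarith) hmR.le
    linarith
  have hrk : (α - 5 * ε) * N - 1 ≤ r / k := by
    rw [le_div_iff₀ hk, hN]
    have : ((α - 5 * ε) * ((n : ℝ) / k) - 1) * k = (α - 5 * ε) * n - k := by field_simp
    rw [this]; linarith
  have hD2 : (D : ℝ) ≤ (α - 8 * ε) * N + 1 := by rw [hN, ← mul_div_assoc]; exact hD
  have hεN : ε * m ≤ ε * N := mul_le_mul_of_nonneg_left (by linarith) hε.le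
  have hαN : α * m ≤ α * N := mul_le_mul_of_nonneg_left (by linarith) hα0.le
  have hαN' : α * N ≤ α * m + ε * m / 1024 := by
    rw [hNm, mul_add]
    have : α * (ρ / k) ≤ 1 * (ρ / k) := mul_le_mul_of_nonneg_right hα1.le hρ0
    linarith
  have hαN'' : 10 ^ 4 * (ε * m) ≤ α * m := by
    rw [← mul_assoc]; exact mul_le_mul_of_nonneg_right hα hmR.le
  have hεN' : ε * N ≤ 2 * (ε * m) := by
    rw [hNm, mul_add]
    have : ε * (ρ / k) ≤ 1 * (ρ / k) := mul_le_mul_of_nonneg_right (by linarith) hρ0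
    linarith
  have key : ∀ i j, ∃ π : Fin D → (Fin m ≃ Fin m), (∀ h x, B.Adj (ψ i x) (ψ j (π h x))) ∧
      ∀ h h' x, π h x = π h' x → h = h' := by
    intro i j
    refine full_pair m (fun x y => B.Adj (ψ i x) (ψ j y)) (fun x y => R (ψ i x) (ψ j y))
      (fun x y h => hRB _ _ h) (fun x y => R (ψ i y) (ψ j x)) (fun x y h => hRB _ _ h)
      (r / k) (ε * m / 512) α ε D hε hm0 le_rfl ?_ ?_ ?_ hα0 ?_ ?_ ?_ ?_ ?_ ?_
    · linarith
    · linarith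
    · linarith
    · intro x; have := (abs_le.1 (hRp j (ψ i x))).1; linarith
    · intro x; have := (abs_le.1 (hRm i (ψ j x))).2; linarith
    · intro x; have := (abs_le.1 (hRm i (ψ j x))).1; linarith
    · intro x; have := (abs_le.1 (hRp j (ψ i x))).2; linarith
    · exact expansion B.Adj n m q hV hm0 (ψ i) (ψ j) α hα0 hα1 hq hq' (hbad i) (hU j)
    · have := expansion B.Adj n m q hV hm0 (ψ j) (ψ i) α hα0 hα1 hq hq' (hbad j) (hU i)
      simpa only [B.adj_comm] using this
  choose π hπ1 hπ2 using key
  exact ⟨ψ, π, hψ, hπ1, hπ2⟩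

theorem pe_range {V : Type*} (f : ℕ → V) (k : ℕ) (e : Sym2 V)
    (he : e ∈ pe ((List.range k).map f)) : ∃ t, t + 1 < k ∧ e = s(f t, f (t + 1)) := by
  induction k with
  | zero => simp [pe] at he
  | succ k ih =>
    rw [List.range_succ, List.map_append] at he
    by_cases hk : k = 0
    · subst hk; simp [pe] at he
    obtain ⟨j, rfl⟩ := Nat.exists_eq_succ_of_ne_zero hk
    rw [pe_append _ _ (by simp) (by simp)] at he
    rcases List.mem_append.1 he with h | h
    · obtain ⟨t, ht, h⟩ := ih h
      exact ⟨t, by omega, h⟩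
    · simp [pe, List.range_succ] at h
      exact ⟨j, by omega, h⟩

open scoped Classical in
theorem cost_append {V : Type*} (E : Set (Sym2 V)) (P Q : List V) :
    (pe (P ++ Q)).countP (fun e => e ∉ E) ≤ (pe P).countP (fun e => e ∉ E) +
      (pe Q).countP (fun e => e ∉ E) + 1 := by
  by_cases hP : P = []
  · subst hP; simp [pe]
  by_cases hQ : Q = []
  · subst hQ; simp [pe]
  rw [pe_append P Q hP hQ, List.countP_append, List.countP_cons]
  split_ifs <;> omega

open scoped Classical in
theorem cost_flat {V Y : Type*} (E : Set (Sym2 V)) (f : Y → List V)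
    (hf : ∀ y, ∀ e ∈ pe (f y), e ∈ E) (L : List Y) :
    (pe (L.flatMap f)).countP (fun e => e ∉ E) ≤ L.length := by
  induction L with
  | nil => simp [pe]
  | cons y L ih =>
    rw [List.flatMap_cons]
    have h1 := cost_append E (f y) (L.flatMap f)
    have h2 : (pe (f y)).countP (fun e => e ∉ E) = 0 := by
      rw [List.countP_eq_zero]
      intro e he
      simpa using hf y e he
    rw [List.length_cons]
    omega

/-- Walecki offsets -/
def wo (k t : ℕ) : ℕ := if t % 2 = 0 then t / 2 else k - (t + 1) / 2

theorem wo_lt (k t : ℕ) (ht : t < k) : wo k t < k := by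
  unfold wo; split_ifs <;> omega

theorem wo_inj (k t t' : ℕ) (hk : k % 2 = 0) (ht : t < k) (ht' : t' < k) (h : wo k t = wo k t') :
    t = t' := by
  unfold wo at h; split_ifs at h <;> omega

theorem wo_sum (k t : ℕ) (ht : t + 1 < k) :
    wo k t + wo k (t + 1) = k - 1 ∨ wo k t + wo k (t + 1) = k := by
  unfold wo; split_ifs <;> omega

theorem wal_inj (k c t t' : ℕ) (hk : k % 2 = 0) (ht : t < k) (ht' : t' < k)
    (h : ((c + wo k t : ℕ) : ZMod k) = ((c + wo k t' : ℕ) : ZMod k)) : t = t' := by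
  rw [ZMod.natCast_eq_natCast_iff] at h
  have h1 := Nat.ModEq.add_left_cancel' c h
  exact wo_inj k t t' hk ht ht' (Nat.ModEq.eq_of_lt_of_lt h1 (wo_lt k t ht) (wo_lt k t' ht'))

theorem wal_sum (k K c c' t t' : ℕ) (hk : k = 2 * K) (hc : c < K) (hc' : c' < K)
    (ht : t + 1 < k) (ht' : t' + 1 < k)
    (h : ((c + wo k t : ℕ) : ZMod k) + ((c + wo k (t + 1) : ℕ) : ZMod k) =
      ((c' + wo k t' : ℕ) : ZMod k) + ((c' + wo k (t' + 1) : ℕ) : ZMod k)) : c = c' := by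
  rw [← Nat.cast_add, ← Nat.cast_add, ZMod.natCast_eq_natCast_iff, Nat.modEq_iff_dvd] at h
  have h0 := Int.eq_zero_of_abs_lt_dvd h (by
    rw [abs_lt]
    rcases wo_sum k t ht with h1 | h1 <;> rcases wo_sum k t' ht' with h2 | h2 <;>
    constructor <;> push_cast <;> omega)
  rcases wo_sum k t ht with h1 | h1 <;> rcases wo_sum k t' ht' with h2 | h2 <;>
    omega

open scoped Classical in
theorem walecki {V : Type*} [Fintype V] (k K m ρ D : ℕ) (hk : k = 2 * K)
    (hV : Fintype.card V = k * m + ρ) (B : SimpleGraph V)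
    (ψ : ZMod k → Fin m → V) (π : ZMod k → ZMod k → Fin D → (Fin m ≃ Fin m))
    (hψ : ∀ i i' x x', ψ i x = ψ i' x' → i = i' ∧ x = x')
    (hB : ∀ i j h x, B.Adj (ψ i x) (ψ j (π i j h x)))
    (hπ : ∀ i j h h' x, π i j h x = π i j h' x → h = h') :
    ∃ (l : Fin K × Fin D → List V) (E0 : Fin K × Fin D → Set (Sym2 V)),
      (∀ j, (l j).Nodup) ∧ (∀ j v, v ∈ l j) ∧ (∀ i j, i ≠ j → Disjoint (E0 i) (E0 j)) ∧
      (∀ j, E0 j ⊆ B.edgeSet) ∧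
      (∀ j, (ce (l j) : Multiset (Sym2 V)).countP (fun e => e ∉ E0 j) ≤ m + ρ + 2) := by
  obtain ⟨a, ha⟩ : ∃ a : ℕ → ℕ → ZMod k, ∀ c t, a c t = ((c + wo k t : ℕ) : ZMod k) :=
    ⟨_, fun _ _ => rfl⟩
  have ainj : ∀ c t t', t < k → t' < k → a c t = a c t' → t = t' := by
    intro c t t' ht ht' h
    rw [ha, ha] at h
    exact wal_inj k c t t' (by omega) ht ht' h
  have asum : ∀ c c' t t', c < K → c' < K → t + 1 < k → t' + 1 < k →
      a c t + a c (t + 1) = a c' t' + a c' (t' + 1) → c = c' := by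
    intro c c' t t' hc hc' ht ht' h
    simp only [ha] at h
    exact wal_sum k K c c' t t' hk hc hc' ht ht' h
  obtain ⟨g, hg⟩ : ∃ g : ℕ → Fin D → ℕ → (Fin m ≃ Fin m), ∀ c h t x,
      g c h (t + 1) x = π (a c t) (a c (t + 1)) h (g c h t x) :=
    ⟨fun c h t => Nat.rec (Equiv.refl _) (fun t e => e.trans (π (a c t) (a c (t + 1)) h)) t,
      fun c h t x => rfl⟩
  obtain ⟨b, hb⟩ : ∃ b : Fin K × Fin D → Fin m → List V, ∀ j y,
      b j y = (List.range k).map fun t => ψ (a j.1 t) (g j.1 j.2 t y) := ⟨_, fun _ _ => rfl⟩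
  obtain ⟨L, hL⟩ : ∃ L : Fin K × Fin D → List V, ∀ j, L j = (List.finRange m).flatMap (b j) :=
    ⟨_, fun _ => rfl⟩
  have hLnd : ∀ j, (L j).Nodup := by
    intro j
    rw [hL, List.nodup_flatMap]
    constructor
    · intro y _
      rw [hb]
      refine List.Nodup.map_on ?_ List.nodup_range
      intro t ht t' ht' h
      exact ainj _ _ _ (List.mem_range.1 ht) (List.mem_range.1 ht') (hψ _ _ _ _ h).1
    · refine (List.nodup_finRange m).imp ?_
      intro y y' hy
      simp only [Function.onFun, hb]
      intro v hv hv'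
      obtain ⟨t, ht, rfl⟩ := List.mem_map.1 hv
      obtain ⟨t', ht', h⟩ := List.mem_map.1 hv'
      obtain ⟨h1, h2⟩ := hψ _ _ _ _ h
      have := ainj _ _ _ (List.mem_range.1 ht') (List.mem_range.1 ht) h1
      subst this
      exact hy ((g _ _ _).injective h2).symm
  have hLlen : ∀ j, (L j).length = m * k := by
    intro j
    rw [hL, List.length_flatMap]
    simp [hb]
  obtain ⟨Z, hZ⟩ : ∃ Z : Fin K × Fin D → Finset V, ∀ j, Z j = univ.filter fun v => v ∉ L j :=
    ⟨_, fun _ => rfl⟩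
  have hZc : ∀ j, (Z j).card = ρ := by
    intro j
    have h1 : Z j = ((L j).toFinset)ᶜ := by rw [hZ]; ext v; simp
    rw [h1, card_compl, List.toFinset_card_of_nodup (hLnd j), hLlen, hV, mul_comm m k]
    omega
  refine ⟨fun j => L j ++ (Z j).toList, fun j => {e | ∃ t x, t + 1 < k ∧
    e = s(ψ (a j.1 t) x, ψ (a j.1 (t + 1)) (π (a j.1 t) (a j.1 (t + 1)) j.2 x))}, ?_, ?_, ?_, ?_, ?_⟩
  · intro j
    refine List.Nodup.append (hLnd j) (Finset.nodup_toList _) ?_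
    intro v hv hv'
    rw [Finset.mem_toList, hZ] at hv'
    exact (mem_filter.1 hv').2 hv
  · intro j v
    by_cases hv : v ∈ L j
    · exact List.mem_append_left _ hv
    · refine List.mem_append_right _ ?_
      rw [Finset.mem_toList, hZ]; simp [hv]
  · rintro ⟨c, h⟩ ⟨c', h'⟩ hne
    rw [Set.disjoint_left]
    rintro e ⟨t, x, ht, rfl⟩ ⟨t', x', ht', he⟩
    apply hne
    dsimp only at he
    rw [Sym2.eq_iff] at he
    rcases he with ⟨h1, h2⟩ | ⟨h1, h2⟩
    · obtain ⟨h3, rfl⟩ := hψ _ _ _ _ h1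
      obtain ⟨h4, h5⟩ := hψ _ _ _ _ h2
      have hc := asum c c' t t' c.2 c'.2 ht ht' (by rw [h3, h4])
      have hc : c = c' := Fin.ext hc
      subst hc
      have := ainj _ _ _ (by omega) (by omega) h3
      subst this
      rw [hπ _ _ _ _ _ h5]
    · obtain ⟨h3, h6⟩ := hψ _ _ _ _ h1
      obtain ⟨h4, h5⟩ := hψ _ _ _ _ h2
      have hc := asum c c' t t' c.2 c'.2 ht ht' (by rw [h3, h4, add_comm])
      have hc : c = c' := Fin.ext hc
      subst hc
      have e1 := ainj _ _ _ (by omega) (by omega) h3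
      have e2 := ainj _ _ _ (by omega) (by omega) h4
      omega
  · rintro j e ⟨t, x, ht, rfl⟩
    exact hB _ _ _ _
  · intro j
    obtain ⟨E, hE⟩ : ∃ E : Set (Sym2 V), E = {e | ∃ t x, t + 1 < k ∧
      e = s(ψ (a j.1 t) x, ψ (a j.1 (t + 1)) (π (a j.1 t) (a j.1 (t + 1)) j.2 x))} := ⟨_, rfl⟩
    beta_reduce
    rw [← hE]
    have h1 : (pe (L j)).countP (fun e => e ∉ E) ≤ m := by
      rw [hL]
      refine (cost_flat E (b j) ?_ (List.finRange m)).trans (by simp)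
      intro y e he
      rw [hb] at he
      obtain ⟨t, ht, rfl⟩ := pe_range _ _ _ he
      rw [hE]
      refine ⟨t, g j.1 j.2 t y, ht, ?_⟩
      rw [hg]
    have h2 := cost_append E (L j) (Z j).toList
    have h3 : (pe (Z j).toList).countP (fun e => e ∉ E) ≤ ρ := by
      refine List.countP_le_length.trans ?_
      rw [pe_length, Finset.length_toList, hZc]; omega
    rw [Multiset.coe_countP]
    by_cases h4 : L j ++ (Z j).toList = []
    · rw [h4]; simp [ce]
    · rw [ce_of_ne _ h4, List.countP_cons]
      split_ifs <;> omega

theorem hsum_bound (n k q : ℕ) (x α : ℝ) (hα0 : 0 < α) (hα1 : α < 1) (hn : 7 ≤ n) (hk : k ≤ n)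
    (hq6 : 1 ≤ q) (hq' : q ≤ 7 / α) (hl : 0 ≤ Real.log n) (hx : 200 * Real.log n ≤ x * α) :
    2 * (((n + n + ((n + 1) ^ q + (n + 1) ^ q) : ℕ) : ℝ) * k) * Real.exp (-x) < 1 := by
  have hn0 : (0 : ℝ) < n := by exact_mod_cast (by omega : 0 < n)
  have h1 : n + n + ((n + 1) ^ q + (n + 1) ^ q) ≤ 4 * n ^ (2 * q) := by
    have h2 : n + 1 ≤ (n + 1) ^ q := Nat.le_self_pow (by omega) _
    have h3 : (n + 1) ^ q ≤ n ^ (2 * q) := by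
      rw [pow_mul]; exact Nat.pow_le_pow_left (by nlinarith) q
    omega
  have h4 : 2 * ((n + n + ((n + 1) ^ q + (n + 1) ^ q)) * k) ≤ n ^ (2 * q + 4) := by
    calc 2 * ((n + n + ((n + 1) ^ q + (n + 1) ^ q)) * k) ≤ 2 * ((4 * n ^ (2 * q)) * n) := by gcongr
      _ = n ^ (2 * q) * (8 * n) := by ring
      _ ≤ n ^ (2 * q) * n ^ 4 := by
          apply Nat.mul_le_mul_left
          nlinarith [pow_pos (by omega : 0 < n) 3, Nat.pow_le_pow_left hn 3]
      _ = n ^ (2 * q + 4) := by ring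
  have h5 : 2 * (((n + n + ((n + 1) ^ q + (n + 1) ^ q) : ℕ) : ℝ) * k) ≤ (n : ℝ) ^ (2 * q + 4) := by
    exact_mod_cast h4
  have h6 : ((2 * q + 5 : ℕ) : ℝ) * Real.log n ≤ x := by
    have h7 : (q : ℝ) * α ≤ 7 := by rwa [le_div_iff₀ hα0] at hq'
    have h8 : (((2 * q + 5 : ℕ) : ℝ) * Real.log n) * α ≤ x * α := by
      refine le_trans ?_ hx
      push_cast
      have : (2 * (q : ℝ) + 5) * α ≤ 200 := by nlinarith
      nlinarith
    exact le_of_mul_le_mul_right h8 hα0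
  have h9 := exp_neg_le_of_log hn0 (2 * q + 5) h6
  calc 2 * (((n + n + ((n + 1) ^ q + (n + 1) ^ q) : ℕ) : ℝ) * k) * Real.exp (-x)
      ≤ (n : ℝ) ^ (2 * q + 4) * ((n : ℝ) ^ (2 * q + 5))⁻¹ := by gcongr
    _ = (n : ℝ)⁻¹ := by
        rw [pow_succ _ (2 * q + 4)]; field_simp
    _ < 1 := inv_lt_one_of_one_lt₀ (by exact_mod_cast (by omega : 1 < n))

set_option maxHeartbeats 4000000 in
open scoped Classical in
theorem main_n (n : ℕ) (G : SimpleGraph (Fin n)) (α ε : ℝ) (hε : 0 < ε) (hα : 10 ^ 4 * ε ≤ α)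
    (hα1 : α < 1) (hlog : 10 ^ 11 * Real.log n ≤ ε ^ 5 * n) (hl1 : 2 ≤ Real.log n)
    (hreg : IsRegularGraph G α ε) :
    ∃ 𝒞 : Finset (Finset (Sym2 (Fin n))),
      (α / 2 - 4 * ε) * (n : ℝ) ≤ (𝒞.card : ℝ) ∧
      (∀ s ∈ 𝒞, IsHamCycleEdgeSet G s) ∧
      (𝒞 : Set (Finset (Sym2 (Fin n)))).Pairwise Disjoint := by
  obtain ⟨hQa, hQb⟩ := hreg
  have hn : 0 < n := by
    rcases Nat.eq_zero_or_pos n with h | h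
    · subst h; simp at hl1; norm_num at hl1
    · exact h
  have hnR : (0 : ℝ) < n := by exact_mod_cast hn
  have hn7R : (7 : ℝ) ≤ n := by
    have h1 : Real.exp 2 ≤ n := (Real.le_log_iff_exp_le hnR).1 hl1
    have h2 : Real.exp 2 = Real.exp 1 * Real.exp 1 := by rw [← Real.exp_add]; norm_num
    nlinarith [Real.exp_one_gt_d9]
  have hn7 : 7 ≤ n := by exact_mod_cast hn7R
  have hα0 : 0 < α := by linarith
  have hε1 : ε ≤ 1 / 10 ^ 4 := by linarith
  obtain ⟨B, Hs, hHG, hBG, hBH, hBdeg, hBST⟩ := split_H n (by simp) G α ε hε hα hα1 hlog hl1 hQa hQb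
  obtain ⟨M, hM⟩ : ∃ M : ℝ, M = ε ^ 3 * n / (100 * α) := ⟨_, rfl⟩
  have hMα : M * α = ε ^ 3 * n / 100 := by rw [hM]; field_simp
  have hM0 : 0 < M := by rw [hM]; positivity
  have h5n : 2 * 10 ^ 11 ≤ ε ^ 5 * n := by linarith
  have hεM : 10 ^ 9 * 2 ≤ ε * M := by
    have h1 : ε * M * α = ε ^ 4 * n / 100 := by rw [mul_assoc, hMα]; ring
    have h2 : ε ^ 5 * n ≤ ε ^ 4 * n := by
      have : 0 < ε ^ 4 * n := by positivity
      nlinarith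
    have h3 : ε * M * α ≤ ε * M * 1 := mul_le_mul_of_nonneg_left hα1.le (by positivity)
    linarith
  have hMbig : 10 ^ 9 * 2 ≤ M := by nlinarith
  obtain ⟨m, hm⟩ : ∃ m : ℕ, m = ⌊M⌋₊ := ⟨_, rfl⟩
  have hmM : (m : ℝ) ≤ M := by rw [hm]; exact Nat.floor_le hM0.le
  have hMm : M - 1 < m := by rw [hm]; linarith [Nat.lt_floor_add_one M]
  have hMm' : 99 / 100 * M ≤ m := by linarith
  have hmR : (10 : ℝ) ^ 9 ≤ m := by linarith
  have hm0 : 0 < m := by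
    have : (0 : ℝ) < m := by linarith
    exact_mod_cast this
  have hεm : 10 ^ 9 ≤ ε * m := by nlinarith
  have hmn : 10 ^ 6 * m ≤ ε ^ 2 * n := by
    have h1 : M * (10 ^ 4 * ε) ≤ M * α := mul_le_mul_of_nonneg_left hα hM0.le
    have h2 : (10 ^ 6 * M) * ε ≤ (ε ^ 2 * n) * ε := by rw [hMα] at h1; nlinarith
    have := le_of_mul_le_mul_right h2 hε
    linarith
  obtain ⟨K, hK⟩ : ∃ K : ℕ, K = n / (2 * m) := ⟨_, rfl⟩
  obtain ⟨k, hk⟩ : ∃ k : ℕ, k = 2 * K := ⟨_, rfl⟩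
  obtain ⟨ρ, hρ⟩ : ∃ ρ : ℕ, ρ = n % (2 * m) := ⟨_, rfl⟩
  have hnk : n = k * m + ρ := by
    have := Nat.div_add_mod n (2 * m)
    rw [← hK, ← hρ] at this
    rw [hk]; nlinarith
  have hρm : ρ < 2 * m := by rw [hρ]; exact Nat.mod_lt _ (by omega)
  have hρmR : (ρ : ℝ) ≤ 2 * m := by exact_mod_cast hρm.le
  have hnkR : (n : ℝ) = k * m + ρ := by rw [hnk]; push_cast; ring
  have hmpos : (0 : ℝ) < m := by linarith
  have hεk : 10 ^ 5 ≤ ε * k := by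
    have h1 : 10 ^ 6 * m ≤ (ε ^ 2 * (k + 2)) * m := by
      have : ε ^ 2 * (n : ℝ) ≤ ε ^ 2 * (k * m + 2 * m) :=
        mul_le_mul_of_nonneg_left (by linarith) (by positivity)
      linarith
    have h2 := le_of_mul_le_mul_right h1 hmpos
    have h3 : ε ^ 2 * ((k : ℝ) + 2) ≤ ε * (k + 2) := by
      apply mul_le_mul_of_nonneg_right _ (by positivity)
      nlinarith
    linarith
  have hkpos : (0 : ℝ) < k := by
    by_contra h
    push Not at h
    nlinarith
  have : NeZero k := ⟨by rintro rfl; simp at hkpos⟩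
  have hkm : (k : ℝ) * m ≤ n := by rw [hnkR]; linarith [(Nat.cast_nonneg ρ : (0 : ℝ) ≤ ρ)]
  have hkn : (k : ℝ) ≤ ε * n / 10 ^ 9 := by
    have h1 : (k : ℝ) * 10 ^ 9 ≤ k * (ε * m) := mul_le_mul_of_nonneg_left hεm hkpos.le
    have h2 : ε * (k * m) ≤ ε * n := mul_le_mul_of_nonneg_left hkm hε.le
    linarith
  have hεn : 10 ^ 9 ≤ ε * n := by
    have : (1 : ℝ) ≤ k := by exact_mod_cast Nat.pos_of_ne_zero (NeZero.ne k)
    linarith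
  obtain ⟨r, hr⟩ : ∃ r : ℕ, r = ⌊(α - 5 * ε) * n⌋₊ := ⟨_, rfl⟩
  obtain ⟨D, hD⟩ : ∃ D : ℕ, D = ⌈(α - 8 * ε) * n / k⌉₊ := ⟨_, rfl⟩
  obtain ⟨q, hq⟩ : ∃ q : ℕ, q = ⌈6 / α⌉₊ := ⟨_, rfl⟩
  have hr1 : (r : ℝ) ≤ (α - 5 * ε) * n := by
    rw [hr]; exact Nat.floor_le (mul_nonneg (by linarith) hnR.le)
  have hr2 : (α - 5 * ε) * n - 1 ≤ r := by
    rw [hr]; linarith [Nat.lt_floor_add_one ((α - 5 * ε) * n)]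
  have hD0 : 0 ≤ (α - 8 * ε) * n / k := div_nonneg (mul_nonneg (by linarith) hnR.le) hkpos.le
  have hD1 : (D : ℝ) ≤ (α - 8 * ε) * n / k + 1 := by rw [hD]; exact (Nat.ceil_lt_add_one hD0).le
  have hD2 : (α - 8 * ε) * n / k ≤ D := by rw [hD]; exact Nat.le_ceil _
  have hkD1 : (k : ℝ) * D ≤ (α - 8 * ε) * n + k := by
    have := mul_le_mul_of_nonneg_left hD1 hkpos.le
    have h2 : (k : ℝ) * ((α - 8 * ε) * n / k + 1) = (α - 8 * ε) * n + k := by field_simp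
    linarith
  have hkD2 : (α - 8 * ε) * n ≤ k * D := by
    rw [div_le_iff₀ hkpos] at hD2; linarith
  have hq1 : 6 / α ≤ q := by rw [hq]; exact Nat.le_ceil _
  have h1α : 1 ≤ 1 / α := by rw [le_div_iff₀ hα0]; linarith
  have hq2 : (q : ℝ) ≤ 7 / α := by
    rw [hq]
    have := (Nat.ceil_lt_add_one (by positivity : 0 ≤ 6 / α)).le
    have h3 : 7 / α = 6 / α + 1 / α := by ring
    linarith
  have hq3 : 1 ≤ q := by
    have h3 : 6 / α = 6 * (1 / α) := by ring
    have : (1 : ℝ) ≤ q := by linarith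
    exact_mod_cast this
  have hx : 200 * Real.log n ≤ (ε * m / 1024) ^ 2 / (4 * m) * α := by
    have h1 : (ε * m / 1024) ^ 2 / (4 * m) * α = ε ^ 2 * (m * α) / 4194304 := by
      field_simp; norm_num
    rw [h1]
    have h2 : 99 / 100 * (M * α) ≤ m * α := by
      have := mul_le_mul_of_nonneg_right hMm' hα0.le
      linarith
    have h3 : ε ^ 2 * (99 / 100 * (M * α)) ≤ ε ^ 2 * (m * α) :=
      mul_le_mul_of_nonneg_left h2 (by positivity)
    have h4 : ε ^ 2 * (99 / 100 * (M * α)) = 99 / 10000 * (ε ^ 5 * n) := by rw [hMα]; ring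
    linarith
  have hkle : k ≤ n := by
    have : (k : ℝ) ≤ n := by nlinarith
    exact_mod_cast this
  have hsum := hsum_bound n k q _ α hα0 hα1 hn7 hkle hq3 hq2 (by linarith) hx
  obtain ⟨ψ, π, hψ, hπB, hπ⟩ := exists_blocks n k m ρ r D q (by simp) hnk B α ε hε hα hα1
    (by linarith) (by
      have h1 : ε * ε * n ≤ ε * (α - 3 * ε) * n := by
        apply mul_le_mul_of_nonneg_right _ hnR.le
        exact mul_le_mul_of_nonneg_left (by linarith) hε.le
      have h2 : ε ^ 5 * n ≤ ε * ε * n := by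
        apply mul_le_mul_of_nonneg_right _ hnR.le
        calc ε ^ 5 ≤ ε ^ 2 := pow_le_pow_of_le_one hε.le (by linarith) (by norm_num)
          _ = ε * ε := by ring
      linarith) (by
      rw [div_le_iff₀ hkpos]
      have : (m : ℝ) * 10 ^ 5 ≤ m * (ε * k) := mul_le_mul_of_nonneg_left hεk hmpos.le
      linarith) hr1 hr2 hD1 hq1 hq2 (by rw [neg_div]; exact hsum) hBdeg
    (fun S T h1 h2 h3 => (hBST S T h1 h2 h3).1)
  obtain ⟨l, E0, hnd, hall, hE0, hE0B, hcost⟩ := walecki k K m ρ D hk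
    (by rw [Fintype.card_fin]; exact hnk) B ψ π hψ hπB hπ
  have hJ : Fintype.card (Fin K × Fin D) = K * D := by simp
  have hJR : 2 * ((K * D : ℕ) : ℝ) = k * D := by rw [hk]; push_cast; ring
  obtain ⟨a, ha⟩ : ∃ a : ℕ, a = ⌈3 * ε * n⌉₊ := ⟨_, rfl⟩
  have ha1 : 3 * ε * n ≤ a := by rw [ha]; exact Nat.le_ceil _
  have ha2 : (a : ℝ) ≤ 3 * ε * n + 1 := by
    rw [ha]; exact (Nat.ceil_lt_add_one (by positivity)).le
  obtain ⟨E, -, hE1, -, -, hE2⟩ := sequential G Hs hHG a (m + ρ + 2) (by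
      have : (1 : ℝ) ≤ a := by linarith
      exact_mod_cast this) l hnd hall E0 hE0 (fun j => (hE0B j).trans hBG)
    (fun j => hBH.mono_left (hE0B j)) hcost (by
      intro v
      rw [hJ]
      have h1 := hQa v
      have : 2 * (a : ℝ) + 2 * ((K * D : ℕ) : ℝ) ≤ ((univ.filter fun w => G.Adj v w).card : ℝ) := by
        rw [hJR]; linarith
      exact_mod_cast this) (by
      intro S T hST hS hT
      rw [hJ]
      have hS' : (a : ℝ) ≤ S.card := by exact_mod_cast hS
      have hT' : (a : ℝ) ≤ T.card := by exact_mod_cast hT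
      have h1 := (hBST S T hST (by linarith) (by linarith)).2
      have h2 : (3 * ε * n) * (3 * ε * n) ≤ (S.card : ℝ) * T.card :=
        mul_le_mul (by linarith) (by linarith) (by positivity) (Nat.cast_nonneg _)
      have h3 : ε / 2 * ((3 * ε * n) * (3 * ε * n)) ≤ ε / 2 * ((S.card : ℝ) * T.card) :=
        mul_le_mul_of_nonneg_left h2 (by positivity)
      have h4 : ((m + ρ + 2 : ℕ) : ℝ) ≤ 4 * M := by
        rw [Nat.cast_add, Nat.cast_add, Nat.cast_ofNat]; linarith
      have h5 : (k : ℝ) * D ≤ α * n := by linarith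
      have h6 : ((m + ρ + 2 : ℕ) : ℝ) * (k * D) ≤ (4 * M) * (α * n) :=
        mul_le_mul h4 h5 (by positivity) (by positivity)
      have h7 : (4 * M) * (α * n) = 4 / 100 * (ε ^ 3 * n ^ 2) := by
        calc (4 * M) * (α * n) = 4 * (M * α) * n := by ring
          _ = _ := by rw [hMα]; ring
      have h8 : ε / 2 * ((3 * ε * n) * (3 * ε * n)) = 9 / 2 * (ε ^ 3 * n ^ 2) := by ring
      have h9 : 0 < ε ^ 3 * (n : ℝ) ^ 2 := by positivity
      have h10 : 4 * ((m + ρ + 2 : ℕ) : ℝ) * ((K * D : ℕ) : ℝ) =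
        2 * (((m + ρ + 2 : ℕ) : ℝ) * (k * D)) := by rw [← hJR]; ring
      have : 4 * ((m + ρ + 2 : ℕ) : ℝ) * ((K * D : ℕ) : ℝ) <
          (((S ×ˢ T).filter fun e => s(e.1, e.2) ∈ Hs).card : ℝ) := by
        rw [h10]; linarith
      exact_mod_cast this) univ
  have hham : ∀ j, IsHamCycleEdgeSet G (E j) := by
    intro j
    obtain ⟨l', h1, h2, h3, h4⟩ := hE2 j (mem_univ _)
    obtain ⟨v, w, hw, hw'⟩ := ham_of_list G l' h1 h2 h3 (by simp; omega)
    refine ⟨v, w, ?_, ?_⟩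
    · convert hw
    · rw [h4, hw']; congr!
  have hne : ∀ j, (E j).Nonempty := by
    intro j
    obtain ⟨l', h1, h2, h3, h4⟩ := hE2 j (mem_univ _)
    have hl' : l' ≠ [] := by
      intro h
      have := h2 ⟨0, hn⟩
      rw [h] at this; simp at this
    rw [h4, ce_of_ne _ hl']
    simp
  have hinj : Function.Injective E := by
    intro i j hij
    by_contra h
    have := hE1 i j h
    rw [hij, disjoint_self] at this
    exact (hne j).ne_empty this
  refine ⟨univ.image E, ?_, ?_, ?_⟩
  · rw [card_image_of_injective _ hinj, card_univ, hJ]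
    linarith
  · intro s hs
    obtain ⟨j, -, rfl⟩ := mem_image.1 hs
    exact hham j
  · intro s hs t ht hst
    obtain ⟨i, -, rfl⟩ := mem_image.1 (Finset.mem_coe.1 hs)
    obtain ⟨j, -, rfl⟩ := mem_image.1 (Finset.mem_coe.1 ht)
    exact hE1 i j (fun h => hst (by rw [h]))

open scoped Classical in
/-- if `α_n, ε_n ∈ (0,1)`, `α_n/ε_n → ∞`, `α_n ε_n³ (n log n)^{1/2} → ∞` and
`G_n` is an `(α_n, ε_n)`-regular graph on `n` vertices, then for all large `n` the graph
`G_n` contains at least `(α_n/2 - 4ε_n)n` pairwise edge-disjoint Hamilton cycles. -/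
theorem stmt_0 (α ε : ℕ → ℝ)
    (hα : ∀ n, α n ∈ Set.Ioo (0 : ℝ) 1) (hε : ∀ n, ε n ∈ Set.Ioo (0 : ℝ) 1)
    (h1 : Tendsto (fun n => α n / ε n) atTop atTop)
    (h2 : Tendsto (fun n => α n * (ε n) ^ 3 * Real.sqrt ((n : ℝ) * Real.log n)) atTop atTop)
    (G : ∀ n : ℕ, SimpleGraph (Fin n))
    (hreg : ∀ n, IsRegularGraph (G n) (α n) (ε n)) :
    ∀ᶠ n in atTop, ∃ 𝒞 : Finset (Finset (Sym2 (Fin n))),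
      (α n / 2 - 4 * ε n) * (n : ℝ) ≤ (𝒞.card : ℝ) ∧
      (∀ s ∈ 𝒞, IsHamCycleEdgeSet (G n) s) ∧
      (𝒞 : Set (Finset (Sym2 (Fin n)))).Pairwise Disjoint := by
  have hlogn : ∀ᶠ n : ℕ in atTop, (2 : ℝ) ≤ Real.log n :=
    (Real.tendsto_log_atTop.comp tendsto_natCast_atTop_atTop).eventually_ge_atTop 2
  have hlo : ∀ᶠ n : ℕ in atTop, (10 : ℝ) ^ 66 * Real.log n ^ 11 ≤ n := by
    have h := (Real.isLittleO_pow_log_id_atTop (n := 11)).bound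
      (show (0 : ℝ) < 1 / 10 ^ 66 by positivity)
    have h' := (tendsto_natCast_atTop_atTop (R := ℝ)).eventually h
    filter_upwards [h', hlogn] with n hn hl
    simp only [id, Real.norm_eq_abs] at hn
    rw [abs_of_nonneg (by positivity), abs_of_nonneg (by positivity)] at hn
    linarith
  filter_upwards [h1.eventually_ge_atTop (10 ^ 4), h2.eventually_ge_atTop 1, hlogn, hlo]
    with n ha hb hc hd
  obtain ⟨hα0, hα1⟩ := hα n
  obtain ⟨hε0, hε1⟩ := hε n
  refine main_n n (G n) (α n) (ε n) hε0 ?_ hα1 ?_ hc (hreg n)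
  · rwa [le_div_iff₀ hε0] at ha
  · have hL : 0 < Real.log n := by linarith
    generalize Real.log n = L at *
    generalize α n = a at *
    generalize ε n = e at *
    have hn0 : (0 : ℝ) ≤ n := by positivity
    generalize (n : ℝ) = N at *
    have h3 : 1 ≤ e ^ 3 * Real.sqrt (N * L) := by
      have : a * e ^ 3 * Real.sqrt (N * L) ≤ 1 * e ^ 3 * Real.sqrt (N * L) := by gcongr
      linarith
    have h4 : 1 ≤ e ^ 6 * (N * L) := by
      have h5 : (e ^ 3 * Real.sqrt (N * L)) ^ 2 = e ^ 6 * (N * L) := by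
        rw [mul_pow, Real.sq_sqrt (by positivity)]; ring
      rw [← h5]; exact one_le_pow₀ h3
    have h6 : 1 ≤ (e ^ 6 * (N * L)) ^ 5 := one_le_pow₀ h4
    have h7 : (10 ^ 11 * L) ^ 6 * L ^ 5 ≤ (e ^ 5 * N) ^ 6 * L ^ 5 := by
      calc (10 ^ 11 * L) ^ 6 * L ^ 5 = 10 ^ 66 * L ^ 11 := by ring
        _ ≤ 1 * N := by linarith
        _ ≤ (e ^ 6 * (N * L)) ^ 5 * N := mul_le_mul_of_nonneg_right h6 hn0
        _ = (e ^ 5 * N) ^ 6 * L ^ 5 := by ring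
    have h8 := le_of_mul_le_mul_right h7 (by positivity)
    exact le_of_pow_le_pow_left₀ (by norm_num) (by positivity) h8
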